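/- Let R be a Noetherian domain, A an 𝔸ⁿ-fibration over R, and W = (W₁,…,W_m) an m-tuple residual variable of A over R, so that B := R[W] is a polynomial ring in m variables over R contained in A. Then the following are equivalent: (1) Ω_R(A) is a stably free A-module; (2) A is a stably polynomial algebra over B, i.e., there exist r, s ∈ ℕ and a B-algebra isomorphism A[Z₁,…,Z_r] ≅ B[T₁,…,T_s]. -/

import Mathlib

open TensorProduct

noncomputable section

/-- The residue field `κ(P) = R_P / P R_P` of a commutative ring `R` at a prime ideal `P`. -/
abbrev ResidueFieldAt (R : Type*) [CommRing R] (P : Ideal R) [P.IsPrime] : Type _ :=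
  IsLocalRing.ResidueField (Localization.AtPrime P)

/-- `A ⊗_R κ(P)` is a polynomial ring in `n` variables over `B ⊗_R κ(P)`
for every prime ideal `P` of `R`. -/
def FibersPolynomialOver (R B A : Type*) [CommRing R] [CommRing B] [CommRing A]
    [Algebra R B] [Algebra R A] [Algebra B A] [IsScalarTower R B A] (n : ℕ) : Prop :=
  ∀ (P : Ideal R) (_ : P.IsPrime),
    letI : Algebra (ResidueFieldAt R P ⊗[R] B) (ResidueFieldAt R P ⊗[R] A) :=
      (Algebra.TensorProduct.map (AlgHom.id R (ResidueFieldAt R P))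
        (IsScalarTower.toAlgHom R B A)).toRingHom.toAlgebra
    Nonempty ((ResidueFieldAt R P ⊗[R] A) ≃ₐ[ResidueFieldAt R P ⊗[R] B]
      MvPolynomial (Fin n) (ResidueFieldAt R P ⊗[R] B))

/-- `A` is an `𝔸ⁿ`-fibration over `R`: a finitely generated flat `R`-algebra all of whose
fibres are polynomial rings in `n` variables. -/
def IsAffineFibration (R A : Type*) [CommRing R] [CommRing A] [Algebra R A] (n : ℕ) : Prop :=
  Algebra.FiniteType R A ∧ Module.Flat R A ∧
  ∀ (P : Ideal R) (_ : P.IsPrime),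
    Nonempty ((ResidueFieldAt R P ⊗[R] A) ≃ₐ[ResidueFieldAt R P]
      MvPolynomial (Fin n) (ResidueFieldAt R P))

/-- `W` is an `m`-tuple residual variable of the `𝔸ⁿ`-fibration `A` over `R`. -/
def IsResidualVariable (R A : Type*) [CommRing R] [CommRing A] [Algebra R A]
    (n m : ℕ) (W : Fin m → A) : Prop :=
  AlgebraicIndependent R W ∧
  FibersPolynomialOver R (Algebra.adjoin R (Set.range W)) A (n - m)

/-- A module `M` over `A` is stably free if `M ⊕ Aˢ ≅ Aᵗ` for some `s, t`. -/
def IsStablyFree (A M : Type*) [CommRing A] [AddCommGroup M] [Module A M] : Prop :=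
  ∃ s t : ℕ, Nonempty ((M × (Fin s → A)) ≃ₗ[A] (Fin t → A))

end

/-!
If `Ω[A⁄R]` is stably free: the fibres of `A` over `B` are polynomial rings, so every derivation of
`B` into a residue field of `A` extends to `A`. Hence `A ⊗ Ω[B⁄R] → Ω[A⁄R]` is a split injection,
`Ω[A⁄B]` is stably free, and it becomes free once enough variables are adjoined to `A`. Noetherian
induction on the ideals `I` of `R` then shows that `A / I A` is stably polynomial over `B / I B`.
Flatness removes an element of square zero, so `I` may be taken radical. In that case `A` becomes
polynomial modulo `I`, in some coordinates `f`, after inverting an element `t` regular on `R / I`,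
and coordinates modulo `(I, t)` are available by induction. The two systems are glued by perturbing
the coordinates over `(I, t)` to `f (X) + t ^ (e + 1) • X`, with as many new variables as a basis of
the differentials prescribes.

Conversely the differentials of a polynomial ring over `B` are free over `R`, and freeness of
`Ω[A[Z]⁄R]` descends along the zero section `A[Z] → A` to stable freeness of `Ω[A⁄R]`.
-/

section Noetherian

theorem injective_of_surjective_endomorphism {S : Type*} [CommRing S] [IsNoetherianRing S]
    (f : S →+* S) (hf : Function.Surjective f) : Function.Injective f := by
  have hsurj (k : ℕ) : Function.Surjective (f ^ k : S →+* S) := by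
    simpa only [RingHom.coe_pow] using hf.iterate k
  have hmono : Monotone fun k : ℕ => RingHom.ker (f ^ k) := by
    refine monotone_nat_of_le_succ fun k x hx => ?_
    rw [RingHom.mem_ker] at hx ⊢
    rw [pow_succ', RingHom.mul_def, RingHom.comp_apply, hx, map_zero]
  obtain ⟨k, hk⟩ := monotone_stabilizes_iff_noetherian.mpr ‹IsNoetherianRing S› ⟨_, hmono⟩
  refine (injective_iff_map_eq_zero f).mpr fun x hx => ?_
  obtain ⟨y, rfl⟩ := hsurj k x
  have hy : y ∈ RingHom.ker (f ^ (k + 1)) := by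
    rwa [RingHom.mem_ker, pow_succ', RingHom.mul_def, RingHom.comp_apply]
  exact (hk (k + 1) k.le_succ).ge hy

theorem mvPolynomial_injective_of_surjective {R σ τ : Type*} [CommRing R] [IsNoetherianRing R]
    [Finite τ] (i : σ ↪ τ) (f : MvPolynomial σ R →ₐ[R] MvPolynomial τ R)
    (hf : Function.Surjective f) : Function.Injective f := by
  have hkill : Function.Surjective (MvPolynomial.killCompl (R := R) i.injective) := fun p =>
    ⟨MvPolynomial.rename i p, MvPolynomial.killCompl_rename_app i.injective p⟩
  have hinj : Function.Injective (f ∘ MvPolynomial.killCompl i.injective) :=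
    injective_of_surjective_endomorphism (f.comp (MvPolynomial.killCompl i.injective)).toRingHom
      (hf.comp hkill)
  exact hinj.of_comp_right hkill

end Noetherian

section PowSaturation

variable {R A D : Type*} [CommRing R] [CommRing A] [Algebra R A] [CommRing D] [Algebra R D]

/-- The elements of `A` that some power of `t` multiplies into `S`. It is all of `A` exactly when
`S` and `A` agree after inverting `t`. -/
def powSaturation (t : R) (S : Subalgebra R A) : Subalgebra R A where
  carrier := {a | ∃ N : ℕ, t ^ N • a ∈ S}
  algebraMap_mem' r := ⟨0, S.smul_mem (S.algebraMap_mem r) _⟩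
  add_mem' := by
    rintro a b ⟨N, ha⟩ ⟨N', hb⟩
    refine ⟨N + N', ?_⟩
    rw [smul_add, pow_add, mul_smul, mul_smul, smul_comm (t ^ N) (t ^ N') a]
    exact S.add_mem (S.smul_mem ha _) (S.smul_mem hb _)
  mul_mem' := by
    rintro a b ⟨N, ha⟩ ⟨N', hb⟩
    refine ⟨N + N', ?_⟩
    rw [pow_add, ← smul_mul_smul_comm]
    exact S.mul_mem ha hb

variable {t : R} {S : Subalgebra R A}

theorem mem_powSaturation {a : A} : a ∈ powSaturation t S ↔ ∃ N : ℕ, t ^ N • a ∈ S :=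
  Iff.rfl

theorem le_powSaturation : S ≤ powSaturation t S := fun _ ha => ⟨0, S.smul_mem ha _⟩

theorem mem_powSaturation_of_pow_smul_mem {n : ℕ} {a : A}
    (h : t ^ n • a ∈ powSaturation t S) : a ∈ powSaturation t S := by
  obtain ⟨N, hN⟩ := h
  exact ⟨N + n, by rwa [pow_add, mul_smul]⟩

theorem exists_pow_smul_mem_of_powSaturation_eq_top (h : powSaturation t S = ⊤) (T : Finset A) :
    ∃ N : ℕ, ∀ a ∈ T, t ^ N • a ∈ S := by
  choose N hN using fun a => mem_powSaturation.mp (h ▸ Algebra.mem_top : a ∈ powSaturation t S)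
  refine ⟨T.sup N, fun a ha => ?_⟩
  rw [← Nat.sub_add_cancel (T.le_sup ha : N a ≤ T.sup N), pow_add, mul_smul]
  exact S.smul_mem (hN a) _

variable {P : Type*} [CommRing P] [Algebra R P]

/- The extension is the projection to `D` from the `t`-saturation of the graph of `φ` along `g`,
which is again a graph since `t` is regular on `D`. -/
theorem exists_algHom_comp_eq_of_pow_smul_mem (hD : IsSMulRegular D t) (g : P →ₐ[R] A)
    (hg : Function.Injective g) (φ : P →ₐ[R] D) {s : Set A} (hs : Algebra.adjoin R s = ⊤)
    (h : ∀ a ∈ s, ∃ (N : ℕ) (p : P) (q : D), g p = t ^ N • a ∧ φ p = t ^ N • q) :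
    ∃ ψ : A →ₐ[R] D, ψ.comp g = φ := by
  let Γ := powSaturation t (g.prod φ).range
  let fst : Γ →ₐ[R] A := (AlgHom.fst R A D).comp Γ.val
  have hfst : Function.Bijective fst := by
    constructor
    · refine (injective_iff_map_eq_zero fst).mpr ?_
      rintro ⟨⟨a, q⟩, N, p, hp⟩ ha
      obtain ⟨hpa, hpq⟩ := Prod.mk.inj hp
      obtain rfl : a = 0 := ha
      have hp0 : p = 0 := hg (by simpa using hpa)
      have hq : t ^ N • q = t ^ N • (0 : D) := by simpa [hp0] using hpq.symm
      obtain rfl : q = 0 := hD.pow N hq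
      rfl
    · rw [← AlgHom.range_eq_top, eq_top_iff, ← hs, Algebra.adjoin_le_iff]
      intro a ha
      obtain ⟨N, p, q, hp, hq⟩ := h a ha
      exact ⟨⟨(a, q), N, p, Prod.ext hp hq⟩, rfl⟩
  let e : Γ ≃ₐ[R] A := AlgEquiv.ofBijective fst hfst
  refine ⟨((AlgHom.snd R A D).comp Γ.val).comp e.symm, AlgHom.ext fun p => ?_⟩
  have he : e.symm (g p) = ⟨(g p, φ p), le_powSaturation ⟨p, rfl⟩⟩ :=
    e.symm_apply_eq.mpr rfl
  simp [he]

end PowSaturation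

section Modulo

variable {R P Q M : Type*} [CommRing R] [CommRing P] [Algebra R P] [CommRing Q] [Algebra R Q]
  [CommRing M] [Algebra R M]

theorem mem_map_sup_span_singleton {I : Ideal R} {t : R} {x : M} :
    x ∈ (I ⊔ Ideal.span {t}).map (algebraMap R M) ↔
      ∃ y : M, x - t • y ∈ I.map (algebraMap R M) := by
  rw [Ideal.map_sup, Ideal.map_span, Set.image_singleton, sup_comm, Ideal.mem_span_singleton_sup]
  constructor
  · rintro ⟨y, z, hz, rfl⟩
    exact ⟨y, by rwa [Algebra.smul_def, mul_comm y, add_sub_cancel_left]⟩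
  · rintro ⟨y, hy⟩
    exact ⟨y, _, hy, by rw [Algebra.smul_def]; ring⟩

theorem mem_map_span_singleton {t : R} {x : M} :
    x ∈ (Ideal.span {t}).map (algebraMap R M) ↔ ∃ y : M, t • y = x := by
  rw [← bot_sup_eq (Ideal.span {t}), mem_map_sup_span_singleton, Ideal.map_bot]
  simp only [Ideal.mem_bot, sub_eq_zero, eq_comm]

theorem map_mem_map_algebraMap (f : P →ₐ[R] M) {I : Ideal R} {p : P}
    (hp : p ∈ I.map (algebraMap R P)) : f p ∈ I.map (algebraMap R M) := by
  rw [← f.comp_algebraMap, ← Ideal.map_map]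
  exact Ideal.mem_map_of_mem f hp

theorem mem_map_algebraMap_mvPolynomial {σ : Type*} {I : Ideal R} {p : MvPolynomial σ M} :
    p ∈ I.map (algebraMap R (MvPolynomial σ M)) ↔ ∀ n, p.coeff n ∈ I.map (algebraMap R M) := by
  rw [IsScalarTower.algebraMap_eq R M, ← Ideal.map_map, MvPolynomial.algebraMap_eq,
    MvPolynomial.mem_map_C_iff]

/-- The elements of `M` congruent modulo `I` to an element of the range of `f`: the preimage in `M`
of the range of the reduction of `f`, used to test surjectivity modulo `I`. -/
def rangeModulo (I : Ideal R) (f : P →ₐ[R] M) : Subalgebra R M :=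
  ((Ideal.Quotient.mkₐ R (I.map (algebraMap R M))).comp f).range.comap
    (Ideal.Quotient.mkₐ R (I.map (algebraMap R M)))

theorem mem_rangeModulo {I : Ideal R} {f : P →ₐ[R] M} {v : M} :
    v ∈ rangeModulo I f ↔ ∃ p, v - f p ∈ I.map (algebraMap R M) :=
  exists_congr fun _ => eq_comm.trans Ideal.Quotient.eq

theorem mem_rangeModulo_of_sub_mem {I : Ideal R} {f : P →ₐ[R] M} {v w : M}
    (h : v - w ∈ I.map (algebraMap R M)) (hw : w ∈ rangeModulo I f) : v ∈ rangeModulo I f := by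
  obtain ⟨p, hp⟩ := mem_rangeModulo.mp hw
  exact mem_rangeModulo.mpr ⟨p, by simpa using add_mem h hp⟩

theorem range_le_rangeModulo {I : Ideal R} {f : P →ₐ[R] M} : f.range ≤ rangeModulo I f := by
  rintro _ ⟨p, rfl⟩
  exact mem_rangeModulo.mpr ⟨p, by simp⟩

/-- `f` induces a bijection `P / I P → M / I M`. Stated on elements, so that it can be moved between
ideals and lifted along `R → R / I` without identifying quotient rings. -/
structure BijectiveModulo (I : Ideal R) (f : P →ₐ[R] M) : Prop where
  exists_sub_mem : ∀ v : M, ∃ p : P, v - f p ∈ I.map (algebraMap R M)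
  mem_of_map_mem : ∀ p : P, f p ∈ I.map (algebraMap R M) → p ∈ I.map (algebraMap R P)

namespace BijectiveModulo

variable {I : Ideal R} {f : P →ₐ[R] M}

theorem of_bijective (I : Ideal R) (hf : Function.Bijective f) : BijectiveModulo I f where
  exists_sub_mem v := by
    obtain ⟨p, rfl⟩ := hf.2 v
    exact ⟨p, by simp⟩
  mem_of_map_mem p hp := by
    simpa using map_mem_map_algebraMap (AlgEquiv.ofBijective f hf).symm.toAlgHom hp

theorem of_subsingleton_quotient [Subsingleton (R ⧸ I)] (f : P →ₐ[R] M) : BijectiveModulo I f := by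
  obtain rfl : I = ⊤ := Ideal.Quotient.subsingleton_iff.mp ‹_›
  exact ⟨fun v => ⟨0, by simp [Ideal.map_top]⟩, fun p _ => by simp [Ideal.map_top]⟩

theorem bijective_of_bot (hf : BijectiveModulo ⊥ f) : Function.Bijective f := by
  constructor
  · refine (injective_iff_map_eq_zero f).mpr fun p hp => ?_
    simpa [Ideal.map_bot] using hf.mem_of_map_mem p (by simp [hp])
  · intro v
    obtain ⟨p, hp⟩ := hf.exists_sub_mem v
    rw [Ideal.map_bot, Ideal.mem_bot, sub_eq_zero] at hp
    exact ⟨p, hp.symm⟩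

theorem comp {g : M →ₐ[R] Q} (hg : BijectiveModulo I g) (hf : BijectiveModulo I f) :
    BijectiveModulo I (g.comp f) where
  exists_sub_mem v := by
    obtain ⟨m, hm⟩ := hg.exists_sub_mem v
    obtain ⟨p, hp⟩ := hf.exists_sub_mem m
    refine ⟨p, ?_⟩
    simpa using add_mem hm (map_mem_map_algebraMap g hp)
  mem_of_map_mem p hp := hf.mem_of_map_mem p (hg.mem_of_map_mem _ hp)

theorem mapAlgHom (σ : Type*) (hf : BijectiveModulo I f) :
    BijectiveModulo I (MvPolynomial.mapAlgHom (σ := σ) f) where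
  exists_sub_mem v := by
    rw [← mem_rangeModulo]
    induction v using MvPolynomial.induction_on with
    | C a =>
      obtain ⟨p, hp⟩ := hf.exists_sub_mem a
      refine mem_rangeModulo.mpr ⟨MvPolynomial.C p, ?_⟩
      simpa using map_mem_map_algebraMap (IsScalarTower.toAlgHom R M (MvPolynomial σ M)) hp
    | add v w hv hw => exact add_mem hv hw
    | mul_X v i hv =>
      exact mul_mem hv (mem_rangeModulo.mpr ⟨MvPolynomial.X i, by simp⟩)
  mem_of_map_mem p hp := by
    rw [mem_map_algebraMap_mvPolynomial] at hp ⊢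
    exact fun n => hf.mem_of_map_mem _ (by simpa [MvPolynomial.coeff_map] using hp n)

theorem pow {t : R} (ht : IsSMulRegular M t) (hf : BijectiveModulo (Ideal.span {t}) f) (k : ℕ) :
    BijectiveModulo (Ideal.span {t ^ k}) f := by
  induction k with
  | zero =>
    have : Subsingleton (R ⧸ Ideal.span {t ^ 0}) := by simp
    exact of_subsingleton_quotient f
  | succ k ih =>
    constructor
    · intro v
      obtain ⟨p, hp⟩ := ih.exists_sub_mem v
      obtain ⟨w, hw⟩ := mem_map_span_singleton.mp hp
      obtain ⟨q, hq⟩ := hf.exists_sub_mem w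
      obtain ⟨z, hz⟩ := mem_map_span_singleton.mp hq
      refine ⟨p + t ^ k • q, mem_map_span_singleton.mpr ⟨z, ?_⟩⟩
      rw [pow_succ, mul_smul, hz, smul_sub, hw, map_add, map_smul]
      abel
    · intro p hp
      obtain ⟨w, hw⟩ := mem_map_span_singleton.mp hp
      obtain ⟨q, rfl⟩ := mem_map_span_singleton.mp (ih.mem_of_map_mem p
        (mem_map_span_singleton.mpr ⟨t • w, by rw [← hw, pow_succ, mul_smul]⟩))
      have hq : t • w = f q := ht.pow k <| by
        simpa only [pow_succ, mul_smul, map_smul] using hw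
      obtain ⟨r, rfl⟩ := mem_map_span_singleton.mp
        (hf.mem_of_map_mem q (mem_map_span_singleton.mpr ⟨w, hq⟩))
      exact mem_map_span_singleton.mpr ⟨r, by rw [pow_succ, mul_smul]⟩

theorem surjective_of_powSaturation_range_eq_top {t : R} (ht : IsSMulRegular M t)
    (hf : BijectiveModulo (Ideal.span {t}) f) (hs : powSaturation t f.range = ⊤) :
    Function.Surjective f := by
  intro v
  obtain ⟨N, p, hp : f p = t ^ N • v⟩ := mem_powSaturation.mp (hs ▸ Algebra.mem_top : v ∈ _)
  obtain ⟨q, rfl⟩ := mem_map_span_singleton.mp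
    ((hf.pow ht N).mem_of_map_mem p (mem_map_span_singleton.mpr ⟨v, hp.symm⟩))
  exact ⟨q, ht.pow N (by simpa using hp)⟩

end BijectiveModulo

section Reduction

variable {σ τ : Type*} (I : Ideal R)

/-- The reduction modulo `I` of an algebra map out of a polynomial ring. Its source is the
polynomial ring over `R / I` rather than a quotient of `R[X]`, so that results on
polynomial rings apply. -/
noncomputable def reduceModulo (f : MvPolynomial σ R →ₐ[R] M) :
    MvPolynomial σ (R ⧸ I) →ₐ[R ⧸ I] M ⧸ I.map (algebraMap R M) :=
  MvPolynomial.aeval fun i => Ideal.Quotient.mk _ (f (MvPolynomial.X i))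

variable {I}

theorem reduceModulo_map_mk (f : MvPolynomial σ R →ₐ[R] M) (p : MvPolynomial σ R) :
    reduceModulo I f (MvPolynomial.map (Ideal.Quotient.mk I) p) = Ideal.Quotient.mk _ (f p) := by
  suffices h : (reduceModulo I f).toRingHom.comp (MvPolynomial.map (Ideal.Quotient.mk I)) =
      (Ideal.Quotient.mk _).comp f.toRingHom from RingHom.congr_fun h p
  refine MvPolynomial.ringHom_ext (fun r => ?_) fun i => ?_
  · simp [reduceModulo, ← MvPolynomial.algebraMap_eq]
  · simp [reduceModulo]

theorem map_mk_surjective (p : MvPolynomial σ (R ⧸ I)) :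
    ∃ q, MvPolynomial.map (Ideal.Quotient.mk I) q = p :=
  MvPolynomial.map_surjective _ Ideal.Quotient.mk_surjective p

theorem map_mk_eq_zero_iff {p : MvPolynomial σ R} :
    MvPolynomial.map (Ideal.Quotient.mk I) p = 0 ↔
      p ∈ I.map (algebraMap R (MvPolynomial σ R)) := by
  rw [← RingHom.mem_ker, MvPolynomial.ker_map, Ideal.mk_ker, MvPolynomial.algebraMap_eq]

theorem bijective_reduceModulo_iff {f : MvPolynomial σ R →ₐ[R] M} :
    Function.Bijective (reduceModulo I f) ↔ BijectiveModulo I f := by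
  constructor
  · refine fun h => ⟨fun v => ?_, fun p hp => ?_⟩
    · obtain ⟨p, hp⟩ := h.2 (Ideal.Quotient.mk _ v)
      obtain ⟨p, rfl⟩ := map_mk_surjective p
      rw [reduceModulo_map_mk] at hp
      exact ⟨p, Ideal.Quotient.eq.mp hp.symm⟩
    · rw [← map_mk_eq_zero_iff]
      apply h.1
      rw [reduceModulo_map_mk, map_zero, Ideal.Quotient.eq_zero_iff_mem.mpr hp]
  · refine fun h => ⟨(injective_iff_map_eq_zero _).mpr fun p hp => ?_, fun v => ?_⟩
    · obtain ⟨p, rfl⟩ := map_mk_surjective p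
      rw [reduceModulo_map_mk, Ideal.Quotient.eq_zero_iff_mem] at hp
      exact map_mk_eq_zero_iff.mpr (h.mem_of_map_mem p hp)
    · obtain ⟨v, rfl⟩ := Ideal.Quotient.mk_surjective v
      obtain ⟨p, hp⟩ := h.exists_sub_mem v
      exact ⟨_, (reduceModulo_map_mk f p).trans (Ideal.Quotient.eq.mpr hp).symm⟩

theorem BijectiveModulo.of_rangeModulo_eq_top [IsNoetherianRing R] [Finite τ] (i : σ ↪ τ)
    {κ : MvPolynomial τ R →ₐ[R] M} (hκ : BijectiveModulo I κ) {f : MvPolynomial σ R →ₐ[R] M}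
    (hf : rangeModulo I f = ⊤) : BijectiveModulo I f := by
  let e := AlgEquiv.ofBijective _ (bijective_reduceModulo_iff.mpr hκ)
  have hsurj : Function.Surjective (reduceModulo I f) := fun v => by
    obtain ⟨v, rfl⟩ := Ideal.Quotient.mk_surjective v
    obtain ⟨p, hp⟩ := mem_rangeModulo.mp (hf ▸ Algebra.mem_top : v ∈ rangeModulo I f)
    exact ⟨_, (reduceModulo_map_mk f p).trans (Ideal.Quotient.eq.mpr hp).symm⟩
  have hinj : Function.Injective (e.symm ∘ reduceModulo I f) :=
    mvPolynomial_injective_of_surjective i (e.symm.toAlgHom.comp (reduceModulo I f))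
      (e.symm.surjective.comp hsurj)
  exact bijective_reduceModulo_iff.mp ⟨hinj.of_comp, hsurj⟩

theorem BijectiveModulo.reduceModulo {t : R} {f : MvPolynomial σ R →ₐ[R] M}
    (hf : BijectiveModulo (I ⊔ Ideal.span {t}) f) :
    BijectiveModulo (Ideal.span {Ideal.Quotient.mk I t}) (reduceModulo I f) where
  exists_sub_mem v := by
    obtain ⟨v, rfl⟩ := Ideal.Quotient.mk_surjective v
    obtain ⟨p, hp⟩ := hf.exists_sub_mem v
    obtain ⟨y, hy⟩ := mem_map_sup_span_singleton.mp hp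
    refine ⟨MvPolynomial.map (Ideal.Quotient.mk I) p,
      mem_map_span_singleton.mpr ⟨Ideal.Quotient.mk _ y, ?_⟩⟩
    rw [reduceModulo_map_mk, Ideal.Quotient.mk_smul_mk_quotient_map_quotient, ← map_sub,
      ← Algebra.smul_def]
    exact (Ideal.Quotient.eq.mpr hy).symm
  mem_of_map_mem p hp := by
    obtain ⟨p, rfl⟩ := map_mk_surjective p
    obtain ⟨y, hy⟩ := mem_map_span_singleton.mp hp
    obtain ⟨y, rfl⟩ := Ideal.Quotient.mk_surjective y
    rw [reduceModulo_map_mk, Ideal.Quotient.mk_smul_mk_quotient_map_quotient, eq_comm,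
      Ideal.Quotient.eq, ← Algebra.smul_def] at hy
    obtain ⟨q, hq⟩ := mem_map_sup_span_singleton.mp
      (hf.mem_of_map_mem p (mem_map_sup_span_singleton.mpr ⟨y, hy⟩))
    refine mem_map_span_singleton.mpr ⟨MvPolynomial.map (Ideal.Quotient.mk I) q, ?_⟩
    rw [eq_comm, ← sub_eq_zero, MvPolynomial.smul_eq_C_mul, ← MvPolynomial.map_C, ← map_mul,
      ← map_sub, ← MvPolynomial.smul_eq_C_mul]
    exact map_mk_eq_zero_iff.mpr hq

end Reduction

end Modulo

section Kaehler

variable {R A T ι : Type*} [CommRing R] [CommRing A] [Algebra R A] [CommRing T] [Algebra R T]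

theorem nonempty_kaehler_basis_of_algEquiv (e : A ≃ₐ[R] T) (b : Module.Basis ι A Ω[A⁄R]) :
    Nonempty (Module.Basis ι T Ω[T⁄R]) := by
  let : Algebra A T := e.toRingHom.toAlgebra
  have : IsScalarTower R A T := IsScalarTower.of_algebraMap_eq fun r => (e.commutes r).symm
  have : Algebra.IsPushout R R A T :=
    (Algebra.IsPushout.of_bijective_right (R := R) (A := A) (T := T) e.bijective).symm
  exact ⟨(b.baseChange T).map (KaehlerDifferential.tensorKaehlerEquiv R R A T)⟩

theorem nonempty_kaehler_basis_quotient (I : Ideal R) (b : Module.Basis ι A Ω[A⁄R]) :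
    Nonempty (Module.Basis ι (A ⧸ I.map (algebraMap R A)) Ω[A ⧸ I.map (algebraMap R A)⁄R ⧸ I]) := by
  have : Algebra.IsPushout R (R ⧸ I) A (A ⧸ I.map (algebraMap R A)) :=
    ⟨IsBaseChange.of_equiv
      (Algebra.TensorProduct.quotIdealMapEquivQuotTensor A I).symm.toLinearEquiv fun a =>
        (AlgEquiv.symm_apply_eq _).mpr
          (Algebra.TensorProduct.quotIdealMapEquivQuotTensor_mk A I a).symm⟩
  exact ⟨(b.baseChange _).map
    (KaehlerDifferential.tensorKaehlerEquiv R (R ⧸ I) A (A ⧸ I.map (algebraMap R A)))⟩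

theorem eq_top_of_forall_kaehler_D_mem {s : Set A} (hs : Algebra.adjoin R s = ⊤)
    {N : Submodule A Ω[A⁄R]} (h : ∀ a ∈ s, KaehlerDifferential.D R A a ∈ N) : N = ⊤ := by
  have hD : N.mkQ.compDer (KaehlerDifferential.D R A) = 0 :=
    Derivation.ext_of_adjoin_eq_top s hs fun a ha => (Submodule.Quotient.mk_eq_zero N).mpr (h a ha)
  rw [eq_top_iff, ← KaehlerDifferential.span_range_derivation, Submodule.span_le]
  rintro _ ⟨a, rfl⟩
  exact (Submodule.Quotient.mk_eq_zero N).mp (Derivation.congr_fun hD a)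

theorem kaehler_D_mem_span_of_mem_range {σ : Type*} (g : MvPolynomial σ R →ₐ[R] A) {a : A}
    (ha : a ∈ g.range) :
    KaehlerDifferential.D R A a ∈
      Submodule.span A (Set.range fun j => KaehlerDifferential.D R A (g (MvPolynomial.X j))) := by
  obtain ⟨p, rfl⟩ := ha
  induction p using MvPolynomial.induction_on with
  | C r => simp [← MvPolynomial.algebraMap_eq]
  | add p q hp hq => simpa only [map_add] using add_mem hp hq
  | mul_X p i hp =>
    simp only [AlgHom.toRingHom_eq_coe, RingHom.coe_coe, map_mul, Derivation.leibniz] at hp ⊢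
    exact add_mem (Submodule.smul_mem _ _ (Submodule.subset_span ⟨i, rfl⟩))
      (Submodule.smul_mem _ _ hp)

theorem exists_pow_smul_kaehler_mem_span [Algebra.FiniteType R A] {σ : Type*} {t : R}
    (g : MvPolynomial σ R →ₐ[R] A) (hg : powSaturation t g.range = ⊤) :
    ∃ e : ℕ, ∀ ω : Ω[A⁄R], t ^ e • ω ∈
      Submodule.span A (Set.range fun j => KaehlerDifferential.D R A (g (MvPolynomial.X j))) := by
  obtain ⟨s, hs⟩ := Algebra.FiniteType.out (R := R) (A := A)
  obtain ⟨e, he⟩ := exists_pow_smul_mem_of_powSaturation_eq_top hg s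
  refine ⟨e, fun ω => ?_⟩
  set N := Submodule.span A (Set.range fun j => KaehlerDifferential.D R A (g (MvPolynomial.X j)))
  have htop : N.comap (LinearMap.lsmul A Ω[A⁄R] (algebraMap R A (t ^ e))) = ⊤ := by
    refine eq_top_of_forall_kaehler_D_mem hs fun a ha => ?_
    have := kaehler_D_mem_span_of_mem_range g (he a ha)
    rwa [Derivation.map_smul, ← algebraMap_smul A (t ^ e)] at this
  rw [← algebraMap_smul A (t ^ e)]
  exact htop.ge (Submodule.mem_top : ω ∈ ⊤)

end Kaehler

section LocalizedCoordinates

variable {R A σ : Type*} [CommRing R] [CommRing A] [Algebra R A] {t : R}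

theorem isSMulRegular_mvPolynomial (ht : IsSMulRegular A t) :
    IsSMulRegular (MvPolynomial σ A) t := fun p q hpq =>
  MvPolynomial.ext _ _ fun n => ht (by simpa using congrArg (MvPolynomial.coeff n) hpq)

theorem injective_algebraMap_away (ht : IsSMulRegular R t) :
    Function.Injective (algebraMap R (Localization.Away t)) := by
  refine IsLocalization.injective (M := Submonoid.powers t) _ (Submonoid.powers_le.mpr ?_)
  exact mem_nonZeroDivisors_iff_right.mpr fun r hr =>
    ht.right_eq_zero_of_smul (by rwa [smul_eq_mul, mul_comm])

theorem exists_localizedCoordinates (hR : IsSMulRegular R t) (hA : IsSMulRegular A t)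
    {g : MvPolynomial σ R →ₐ[R] A} (hg : Function.Injective g) (hgt : powSaturation t g.range = ⊤) :
    ∃ ρ : A →ₐ[R] MvPolynomial σ (Localization.Away t), Function.Injective ρ ∧
      ∀ p, ρ (g p) = MvPolynomial.map (algebraMap R (Localization.Away t)) p := by
  let φ := MvPolynomial.mapAlgHom (σ := σ) (Algebra.ofId R (Localization.Away t))
  have hsmul (N : ℕ) : Function.Bijective
      fun q : MvPolynomial σ (Localization.Away t) => t ^ N • q := by
    have hunit : IsUnit (algebraMap R (Localization.Away t) (t ^ N)) :=
      (map_pow (algebraMap R (Localization.Away t)) t N).symm ▸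
        (IsLocalization.Away.algebraMap_isUnit t).pow N
    simpa only [algebraMap_smul] using
      hunit.smul_bijective (β := MvPolynomial σ (Localization.Away t))
  have ht : IsSMulRegular (MvPolynomial σ (Localization.Away t)) t :=
    fun p q hpq => (hsmul 1).1 (by simpa only [pow_one] using hpq)
  have hfrac (a : A) : ∃ (N : ℕ) (p : MvPolynomial σ R) (q : _),
      g p = t ^ N • a ∧ φ p = t ^ N • q := by
    obtain ⟨N, p, hp⟩ := mem_powSaturation.mp (hgt ▸ Algebra.mem_top : a ∈ powSaturation t g.range)
    obtain ⟨q, hq⟩ := (hsmul N).2 (φ p)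
    exact ⟨N, p, q, hp, hq.symm⟩
  obtain ⟨ρ, hρ⟩ := exists_algHom_comp_eq_of_pow_smul_mem ht g hg φ
    (Algebra.adjoin_univ R A) fun a _ => hfrac a
  have hρg (p) : ρ (g p) = MvPolynomial.map (algebraMap R (Localization.Away t)) p :=
    DFunLike.congr_fun hρ p
  refine ⟨ρ, (injective_iff_map_eq_zero ρ).mpr fun a ha => ?_, hρg⟩
  obtain ⟨N, p, -, hp, -⟩ := hfrac a
  have hp0 : p = 0 := MvPolynomial.map_injective _ (injective_algebraMap_away hR) <| by
    simpa [hp, ha] using (hρg p).symm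
  exact (hA.pow N).right_eq_zero_of_smul (by rw [← hp, hp0, map_zero])

theorem linearIndependent_kaehler_D (hR : IsSMulRegular R t) (hA : IsSMulRegular A t)
    {g : MvPolynomial σ R →ₐ[R] A} (hg : Function.Injective g) (hgt : powSaturation t g.range = ⊤) :
    LinearIndependent A fun j => KaehlerDifferential.D R A (g (MvPolynomial.X j)) := by
  classical
  obtain ⟨ρ, hρ, hρg⟩ := exists_localizedCoordinates hR hA hg hgt
  let : Algebra A (MvPolynomial σ (Localization.Away t)) := ρ.toRingHom.toAlgebra
  have : IsScalarTower R A (MvPolynomial σ (Localization.Away t)) :=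
    IsScalarTower.of_algebraMap_eq fun r => (ρ.commutes r).symm
  let partialD (i : σ) : Ω[A⁄R] →ₗ[A] MvPolynomial σ (Localization.Away t) :=
    (((MvPolynomial.pderiv i).restrictScalars R).compAlgebraMap A).liftKaehlerDifferential
  have hpartialD (i j : σ) : partialD i (KaehlerDifferential.D R A (g (MvPolynomial.X j))) =
      (Pi.single i 1 : σ → MvPolynomial σ (Localization.Away t)) j := by
    rw [Derivation.liftKaehlerDifferential_comp_D]
    change MvPolynomial.pderiv i (ρ (g (MvPolynomial.X j))) = _
    rw [hρg, MvPolynomial.map_X, MvPolynomial.pderiv_X]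
  rw [linearIndependent_iff']
  intro s a ha i hi
  refine hρ (.trans ?_ (map_zero ρ).symm)
  have := congrArg (partialD i) ha
  simpa [hpartialD, Pi.single_apply, hi, Algebra.smul_def,
    show algebraMap A (MvPolynomial σ (Localization.Away t)) (a i) = ρ (a i) from rfl] using this

theorem exists_embedding_of_kaehler_basis [Finite σ] {ι : Type*} [Finite ι]
    [Algebra.FiniteType R A] (hA : IsSMulRegular A t) [Nontrivial A] (g : MvPolynomial σ R →ₐ[R] A)
    (hgt : powSaturation t g.range = ⊤) (b : Module.Basis ι A Ω[A⁄R]) : Nonempty (ι ↪ σ) := by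
  classical
  have := Fintype.ofFinite σ
  have := Fintype.ofFinite ι
  obtain ⟨e, he⟩ := exists_pow_smul_kaehler_mem_span g hgt
  have hreg : IsSMulRegular Ω[A⁄R] (algebraMap R A (t ^ e)) := fun x y hxy =>
    b.ext_elem fun i => (hA.pow e) <| by
      simpa [Algebra.smul_def] using congrArg (fun z => b.repr z i) hxy
  have hli : LinearIndependent A (LinearMap.lsmul A Ω[A⁄R] (algebraMap R A (t ^ e)) ∘ b) :=
    b.linearIndependent.map' _ (LinearMap.ker_eq_bot.mpr hreg)
  refine Function.Embedding.nonempty_of_card_le ?_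
  refine (linearIndependent_le_span_aux' _ hli (Set.range fun j => KaehlerDifferential.D R A
    (g (MvPolynomial.X j))) ?_).trans (Fintype.card_range_le _)
  rintro _ ⟨i, rfl⟩
  simpa only [Function.comp_apply, LinearMap.lsmul_apply, algebraMap_smul, SetLike.mem_coe]
    using he (b i)

end LocalizedCoordinates

theorem exists_semilinearMap_smul_eq {R A M V : Type*} [CommRing R] [CommRing A] [CommRing V]
    [Algebra R V] [AddCommGroup M] [Module A M] {χ : A →+* V} (E : M →ₛₗ[χ] V) {s : R}
    (hs : IsSMulRegular V s) (h : ∀ m, ∃ v, s • v = E m) :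
    ∃ η : M →ₛₗ[χ] V, ∀ m, s • η m = E m := by
  choose η hη using h
  refine ⟨⟨⟨η, fun m m' => hs ?_⟩, fun a m => hs ?_⟩, hη⟩
  · simp only [smul_add, hη, map_add]
  · simp only [smul_comm s, hη, LinearMap.map_smulₛₗ]

section Gluing

variable {R A : Type*} [CommRing R] [CommRing A] [Algebra R A] {t : R}

theorem sub_mem_of_adjoin_eq_top {J : Ideal A} {P : Type*} [CommRing P] [Algebra R P]
    {u v : P →ₐ[R] A} {s : Set P} (hs : Algebra.adjoin R s = ⊤) (h : ∀ p ∈ s, u p - v p ∈ J)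
    (p : P) : u p - v p ∈ J := by
  have hJ : (Ideal.Quotient.mkₐ R J).comp u = (Ideal.Quotient.mkₐ R J).comp v :=
    AlgHom.ext_of_adjoin_eq_top hs fun p hp => Ideal.Quotient.eq.mpr (h p hp)
  exact Ideal.Quotient.eq.mp (DFunLike.congr_fun hJ p)

theorem exists_algHom_sub_mem [Algebra.FiniteType R A] {P σ : Type*} [CommRing P] [Algebra R P]
    (hP : IsSMulRegular P t) (hA : IsSMulRegular A t) {f : P →ₐ[R] A}
    (hf : BijectiveModulo (Ideal.span {t}) f) {g : MvPolynomial σ R →ₐ[R] A}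
    (hg : Function.Injective g) (hgt : powSaturation t g.range = ⊤) (k : ℕ) :
    ∃ ψ : A →ₐ[R] P, ∀ a, a - f (ψ a) ∈ (Ideal.span {t ^ k}).map (algebraMap R A) := by
  obtain ⟨s, hs⟩ := Algebra.FiniteType.out (R := R) (A := A)
  obtain ⟨e, he⟩ := exists_pow_smul_mem_of_powSaturation_eq_top hgt s
  choose x hx using fun j => (hf.pow hA (k + e)).exists_sub_mem (g (MvPolynomial.X j))
  let φ : MvPolynomial σ R →ₐ[R] P := MvPolynomial.aeval x
  have hφ (q) : g q - f (φ q) ∈ (Ideal.span {t ^ (k + e)}).map (algebraMap R A) := by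
    refine sub_mem_of_adjoin_eq_top (u := g) (v := f.comp φ) MvPolynomial.adjoin_range_X ?_ q
    rintro _ ⟨j, rfl⟩
    simpa [φ] using hx j
  have hdvd (q : MvPolynomial σ R) (a : A) (hq : g q = t ^ e • a) :
      ∃ q', φ q = t ^ e • q' ∧ a - f q' ∈ (Ideal.span {t ^ k}).map (algebraMap R A) := by
    obtain ⟨w, hw⟩ := mem_map_span_singleton.mp (hφ q)
    have hfq : f (φ q) = t ^ e • (a - t ^ k • w) := by
      rw [smul_sub, ← mul_smul, ← pow_add, add_comm e k, hw, hq, sub_sub_cancel]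
    obtain ⟨q', hq'⟩ := mem_map_span_singleton.mp
      ((hf.pow hA e).mem_of_map_mem _ (mem_map_span_singleton.mpr ⟨_, hfq.symm⟩))
    refine ⟨q', hq'.symm, mem_map_span_singleton.mpr ⟨w, ?_⟩⟩
    rw [eq_sub_iff_add_eq, ← eq_sub_iff_add_eq']
    exact hA.pow e (by simpa only [← hq', map_smul] using hfq)
  obtain ⟨ψ, hψ⟩ := exists_algHom_comp_eq_of_pow_smul_mem hP g hg φ hs fun a ha => by
    obtain ⟨q, hq⟩ := he a ha
    obtain ⟨q', hq', -⟩ := hdvd q a hq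
    exact ⟨e, q, q', hq, hq'⟩
  refine ⟨ψ, sub_mem_of_adjoin_eq_top (u := AlgHom.id R A) (v := f.comp ψ) hs fun a ha => ?_⟩
  obtain ⟨q, hq : g q = t ^ e • a⟩ := he a ha
  obtain ⟨q', hq', ha'⟩ := hdvd q a hq
  have hψa : ψ a = q' := hP.pow e <| show t ^ e • ψ a = t ^ e • q' by
    rw [← hq', ← hψ, AlgHom.comp_apply, hq, map_smul]
  simpa [hψa] using ha'

section DifferenceQuotient

variable {V : Type*} [CommRing V] [Algebra R V] [Algebra A V] [IsScalarTower R A V]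
  {χ : A →ₐ[R] V} {d : A → V}

theorem exists_kaehler_linearMap_of_eq_add_smul {s : R} (hs : IsSMulRegular V s)
    (hd : ∀ a, algebraMap A V a = χ a + s • d a) :
    ∃ ℓ : Ω[A⁄R] →ₗ[A] V ⧸ (Ideal.span {s}).map (algebraMap R V),
      ∀ a, ℓ (KaehlerDifferential.D R A a) = Ideal.Quotient.mk _ (d a) := by
  have hd' (a) : s • d a = algebraMap A V a - χ a := by rw [hd, add_sub_cancel_left]
  let d' : A →ₗ[R] V :=
    { toFun := d
      map_add' := fun a b => hs (by simp only [smul_add, hd', map_add]; ring)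
      map_smul' := fun r a => hs <| by
        simp only [smul_comm s r, hd', RingHom.id_apply, map_smul, smul_sub,
          ← IsScalarTower.coe_toAlgHom' R A V] }
  have hleib (a b : A) : d (a * b) = algebraMap A V a * d b + χ b * d a := hs <| by
    simp only [smul_add, ← mul_smul_comm, hd', map_mul]
    ring
  let δ : Derivation R A (V ⧸ (Ideal.span {s}).map (algebraMap R V)) :=
    Derivation.mk' ((Ideal.Quotient.mkₐ R _).toLinearMap ∘ₗ d') fun a b => by
      have hχ : (Ideal.Quotient.mk ((Ideal.span {s}).map (algebraMap R V))) (χ b) =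
          Ideal.Quotient.mk _ (algebraMap A V b) :=
        (Ideal.Quotient.eq.mpr (mem_map_span_singleton.mpr ⟨d b, hd' b⟩)).symm
      simp only [LinearMap.comp_apply, AlgHom.toLinearMap_apply, Ideal.Quotient.mkₐ_eq_mk]
      change Ideal.Quotient.mk _ (d (a * b)) =
        a • Ideal.Quotient.mk _ (d b) + b • Ideal.Quotient.mk _ (d a)
      rw [hleib, map_add, map_mul, map_mul, hχ, Algebra.smul_def, Algebra.smul_def]
      rfl
  exact ⟨δ.liftKaehlerDifferential, fun a => δ.liftKaehlerDifferential_comp_D a⟩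

theorem exists_coordinates_of_smul_mem_span {σ M : Type*} [AddCommGroup M] [Module A M]
    {v : σ → M} (hv : LinearIndependent A v) {a : A}
    (ha : ∀ m, a • m ∈ Submodule.span A (Set.range v)) :
    ∃ c : M →ₗ[A] σ →₀ A, (∀ m, Finsupp.linearCombination A v (c m) = a • m) ∧
      ∀ j, c (v j) = Finsupp.single j a := by
  let c := hv.repr ∘ₗ (LinearMap.lsmul A M a).codRestrict _ ha
  have hc (m) : Finsupp.linearCombination A v (c m) = a • m := hv.linearCombination_repr _
  exact ⟨c, hc, fun j => hv (by rw [hc, Finsupp.linearCombination_single])⟩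

/- `η` is `t ^ (-e)` times the `χ`-semilinear extension of `D (x j) ↦ d (x j)`; this is integral
because it agrees modulo `t ^ (e + 1)` with `t ^ e` times the linear map induced by `d`. -/
theorem exists_semilinearMap_kaehler {σ : Type*} {x : σ → A} {e : ℕ} (ht : IsSMulRegular V t)
    (hx : LinearIndependent A fun j => KaehlerDifferential.D R A (x j))
    (he : ∀ ω : Ω[A⁄R],
      t ^ e • ω ∈ Submodule.span A (Set.range fun j => KaehlerDifferential.D R A (x j)))
    (hd : ∀ a, algebraMap A V a = χ a + t ^ (e + 1) • d a) :
    ∃ η : Ω[A⁄R] →ₛₗ[(χ : A →+* V)] V, (∀ j, η (KaehlerDifferential.D R A (x j)) = d (x j)) ∧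
      ∀ a, d a - η (KaehlerDifferential.D R A a) ∈ (Ideal.span {t}).map (algebraMap R V) := by
  obtain ⟨ℓ, hℓ⟩ := exists_kaehler_linearMap_of_eq_add_smul (ht.pow (e + 1)) hd
  obtain ⟨c, hc, hcx⟩ := exists_coordinates_of_smul_mem_span (a := algebraMap R A (t ^ e)) hx
    fun ω => by rw [algebraMap_smul]; exact he ω
  have hχ (a : A) : Ideal.Quotient.mk ((Ideal.span {t ^ (e + 1)}).map (algebraMap R V)) (χ a) =
      Ideal.Quotient.mk _ (algebraMap A V a) :=
    (Ideal.Quotient.eq.mpr (mem_map_span_singleton.mpr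
      ⟨d a, by rw [hd, add_sub_cancel_left]⟩)).symm
  let E : Ω[A⁄R] →ₛₗ[(χ : A →+* V)] V := Finsupp.linearCombination V (fun j => d (x j)) ∘ₛₗ
    Finsupp.mapRange.linearMap (χ : A →+* V).toSemilinearMap ∘ₛₗ c
  have hE_apply (ω) : E ω = (c ω).sum fun j a => χ a * d (x j) := by
    simp [E, Finsupp.linearCombination_apply, Finsupp.sum_mapRange_index]
  have hE (ω z) (hz : ℓ ω = Ideal.Quotient.mk _ z) : ∃ w, t ^ e • (z + t • w) = E ω := by
    have hmk : Ideal.Quotient.mk _ (E ω) = t ^ e • ℓ ω := by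
      rw [← algebraMap_smul A, ← map_smul, ← hc, Finsupp.linearCombination_apply]
      simp only [hE_apply, Finsupp.sum, map_sum, map_mul, map_smul, hℓ]
      refine Finset.sum_congr rfl fun j _ => ?_
      rw [Algebra.smul_def, hχ]
      rfl
    rw [hz] at hmk
    obtain ⟨w, hw⟩ := mem_map_span_singleton.mp (Ideal.Quotient.eq.mp hmk)
    exact ⟨w, by rw [smul_add, ← mul_smul, ← pow_succ, hw, add_sub_cancel]⟩
  have hdvd (ω) : ∃ y, t ^ e • y = E ω := by
    obtain ⟨z, hz⟩ := Ideal.Quotient.mk_surjective (ℓ ω)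
    exact (hE ω z hz.symm).imp' _ fun w hw => hw
  obtain ⟨η, hη⟩ := exists_semilinearMap_smul_eq E (ht.pow e) hdvd
  refine ⟨η, fun j => ht.pow e ((hη _).trans ?_), fun a => ?_⟩
  · simp [E, hcx, Algebra.smul_def]
  · obtain ⟨w, hw⟩ := hE _ _ (hℓ a)
    have hηa : η (KaehlerDifferential.D R A a) = d a + t • w := ht.pow e ((hη _).trans hw.symm)
    exact mem_map_span_singleton.mpr ⟨-w, by simp [hηa]⟩

end DifferenceQuotient

end Gluing

section GluingMap

variable {R A : Type*} [CommRing R] [CommRing A] [Algebra R A] {t : R} {σ τ ι : Type*}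

/-- The perturbation `X j ↦ f (X j) + s X j` of `f`, with values in `A[X]`. It agrees with `f`
modulo `s`, and hits the new variables `X j`, up to the factor `s`, once `A` is in the range. -/
noncomputable def perturbation (f : MvPolynomial τ R →ₐ[R] A) (s : R) :
    MvPolynomial τ R →ₐ[R] MvPolynomial τ A :=
  MvPolynomial.aeval fun j => MvPolynomial.C (f (MvPolynomial.X j)) + s • MvPolynomial.X j

theorem C_sub_perturbation_mem (f : MvPolynomial τ R →ₐ[R] A) (s : R) (p : MvPolynomial τ R) :
    MvPolynomial.C (f p) - perturbation f s p ∈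
      (Ideal.span {s}).map (algebraMap R (MvPolynomial τ A)) := by
  refine sub_mem_of_adjoin_eq_top (v := perturbation f s)
    (u := (IsScalarTower.toAlgHom R A (MvPolynomial τ A)).comp f) MvPolynomial.adjoin_range_X ?_ p
  rintro _ ⟨j, rfl⟩
  refine mem_map_span_singleton.mpr ⟨-MvPolynomial.X j, ?_⟩
  simp [perturbation, MvPolynomial.algebraMap_eq]

/-- The map `R[X, Y] → A[X]` extending `perturbation f s` by `Y i ↦ y i`. For suitable `y` it is the
isomorphism obtained by gluing coordinates `f` modulo `s` with coordinates away from `s`. -/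
noncomputable def gluingMap (f : MvPolynomial τ R →ₐ[R] A) (s : R) (y : ι → MvPolynomial τ A) :
    MvPolynomial (τ ⊕ ι) R →ₐ[R] MvPolynomial τ A :=
  MvPolynomial.aeval (Sum.elim (fun j => perturbation f s (MvPolynomial.X j)) y)

section Range

variable {f : MvPolynomial τ R →ₐ[R] A} {s : R} {y : ι → MvPolynomial τ A}

theorem perturbation_mem_range_gluingMap (p : MvPolynomial τ R) :
    perturbation f s p ∈ (gluingMap f s y).range := by
  refine ⟨MvPolynomial.rename Sum.inl p, ?_⟩
  suffices h : (gluingMap f s y).comp (MvPolynomial.rename Sum.inl) = perturbation f s from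
    DFunLike.congr_fun h p
  exact MvPolynomial.algHom_ext fun j => by simp [gluingMap]

theorem mem_range_gluingMap (i : ι) : y i ∈ (gluingMap f s y).range :=
  ⟨MvPolynomial.X (Sum.inr i), by simp [gluingMap]⟩

theorem semilinearMap_mem_range_gluingMap [Finite ι] {M : Type*} [AddCommGroup M] [Module A M]
    {ψ : A →ₐ[R] MvPolynomial τ R}
    (η : M →ₛₗ[((perturbation f s).comp ψ : A →+* MvPolynomial τ A)] MvPolynomial τ A)
    (b : Module.Basis ι A M) (m : M) : η m ∈ (gluingMap f s (η ∘ b)).range := by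
  have := Fintype.ofFinite ι
  rw [← b.sum_repr m, map_sum]
  refine sum_mem fun i _ => ?_
  rw [LinearMap.map_smulₛₗ]
  exact mul_mem (perturbation_mem_range_gluingMap _) (mem_range_gluingMap (y := η ∘ b) i)

end Range

theorem eq_top_of_C_mem_of_X_mem {S : Subalgebra R (MvPolynomial τ A)}
    (hC : ∀ a, MvPolynomial.C a ∈ S) (hX : ∀ j, MvPolynomial.X j ∈ S) : S = ⊤ := by
  rw [eq_top_iff]
  rintro p -
  induction p using MvPolynomial.induction_on with
  | C a => exact hC a
  | add p q hp hq => exact add_mem hp hq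
  | mul_X p j hp => exact mul_mem hp (hX j)

section Semilinear

variable [Finite ι] {f : MvPolynomial τ R →ₐ[R] A} {ψ : A →ₐ[R] MvPolynomial τ R} {e : ℕ}
  {d : A → MvPolynomial τ A}
  {η : Ω[A⁄R] →ₛₗ[((perturbation f (t ^ (e + 1))).comp ψ : A →+* MvPolynomial τ A)]
    MvPolynomial τ A}

theorem rangeModulo_gluingMap_eq_top
    (hd : ∀ a, MvPolynomial.C a = perturbation f (t ^ (e + 1)) (ψ a) + t ^ (e + 1) • d a)
    (b : Module.Basis ι A Ω[A⁄R]) (ht : IsSMulRegular (MvPolynomial τ A) t)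
    (hη : ∀ a, d a - η (KaehlerDifferential.D R A a) ∈
      (Ideal.span {t}).map (algebraMap R (MvPolynomial τ A)))
    (hψ : ∀ p, ∃ q, t ^ (e + 1) • q = ψ (f p) - p) :
    rangeModulo (Ideal.span {t}) (gluingMap f (t ^ (e + 1)) (η ∘ b)) = ⊤ := by
  set S := rangeModulo (Ideal.span {t}) (gluingMap f (t ^ (e + 1)) (η ∘ b))
  have hpert (p) : perturbation f (t ^ (e + 1)) p ∈ S :=
    range_le_rangeModulo (perturbation_mem_range_gluingMap p)
  have hdS (a : A) : d a ∈ S := mem_rangeModulo_of_sub_mem (hη a)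
    (range_le_rangeModulo (semilinearMap_mem_range_gluingMap η b _))
  refine eq_top_of_C_mem_of_X_mem (fun a => ?_) fun j => ?_
  · refine mem_rangeModulo_of_sub_mem (mem_map_span_singleton.mpr ⟨t ^ e • d a, ?_⟩) (hpert (ψ a))
    rw [hd, ← mul_smul, ← pow_succ', add_sub_cancel_left]
  · obtain ⟨q, hq⟩ := hψ (MvPolynomial.X j)
    have hX : MvPolynomial.X j =
        -(perturbation f (t ^ (e + 1)) q + d (f (MvPolynomial.X j))) := ht.pow (e + 1) <| by
      have hC := hd (f (MvPolynomial.X j))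
      have hpertX : perturbation f (t ^ (e + 1)) (MvPolynomial.X j) = MvPolynomial.C
          (f (MvPolynomial.X j)) + t ^ (e + 1) • MvPolynomial.X j := MvPolynomial.aeval_X _ j
      rw [← sub_add_cancel (ψ _) (MvPolynomial.X j), ← hq, map_add, map_smul, hpertX] at hC
      simp only [smul_neg, smul_add]
      linear_combination -hC
    rw [hX]
    exact neg_mem (add_mem (hpert q) (hdS _))

theorem powSaturation_range_gluingMap_eq_top
    (hd : ∀ a, MvPolynomial.C a = perturbation f (t ^ (e + 1)) (ψ a) + t ^ (e + 1) • d a)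
    (b : Module.Basis ι A Ω[A⁄R])
    {g : MvPolynomial σ R →ₐ[R] A}
    (hgt : powSaturation t g.range = ⊤)
    (hη : ∀ j, η (KaehlerDifferential.D R A (g (MvPolynomial.X j))) = d (g (MvPolynomial.X j))) :
    powSaturation t (gluingMap f (t ^ (e + 1)) (η ∘ b)).range = ⊤ := by
  set T := (gluingMap f (t ^ (e + 1)) (η ∘ b)).range
  have hpert (p) : perturbation f (t ^ (e + 1)) p ∈ T := perturbation_mem_range_gluingMap p
  have hg (p) : MvPolynomial.C (g p) ∈ T := by
    induction p using MvPolynomial.induction_on with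
    | C r =>
      rw [← MvPolynomial.algebraMap_eq, ← MvPolynomial.algebraMap_eq, AlgHom.commutes,
        ← IsScalarTower.algebraMap_apply]
      exact T.algebraMap_mem r
    | add p q hp hq => simpa only [map_add] using add_mem hp hq
    | mul_X p j hp =>
      rw [map_mul, map_mul, hd (g (MvPolynomial.X j)), ← hη]
      exact mul_mem hp (add_mem (hpert _)
        (T.smul_mem (semilinearMap_mem_range_gluingMap η b _) _))
  have hC (a : A) : MvPolynomial.C a ∈ powSaturation t T := by
    obtain ⟨N, p, hp : g p = t ^ N • a⟩ :=
      mem_powSaturation.mp (hgt ▸ Algebra.mem_top : a ∈ powSaturation t g.range)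
    refine mem_powSaturation.mpr ⟨N, ?_⟩
    have hsmul : MvPolynomial.C (t ^ N • a) = t ^ N • MvPolynomial.C a :=
      map_smul (IsScalarTower.toAlgHom R A (MvPolynomial τ A)) _ _
    exact hsmul ▸ hp ▸ hg p
  refine eq_top_of_C_mem_of_X_mem hC fun j => mem_powSaturation_of_pow_smul_mem (n := e + 1) ?_
  have hX : t ^ (e + 1) • MvPolynomial.X j = perturbation f (t ^ (e + 1)) (MvPolynomial.X j) -
      MvPolynomial.C (f (MvPolynomial.X j)) := by simp [perturbation]
  rw [hX]
  exact sub_mem (le_powSaturation (hpert _)) (hC _)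

end Semilinear

end GluingMap

section GluingTheorem

variable {R A : Type*} [CommRing R] [CommRing A] [Algebra R A] {t : R}
  {σ τ ι : Type*}

theorem powSaturation_mvPolynomial_eq_top {S : Subalgebra R A}
    {S' : Subalgebra R (MvPolynomial τ A)} (hS : powSaturation t S = ⊤)
    (hC : ∀ a ∈ S, MvPolynomial.C a ∈ S') (hX : ∀ j, MvPolynomial.X j ∈ S') :
    powSaturation t S' = ⊤ := by
  refine eq_top_of_C_mem_of_X_mem (fun a => ?_) fun j => le_powSaturation (hX j)
  obtain ⟨N, hN⟩ := mem_powSaturation.mp (hS ▸ Algebra.mem_top : a ∈ powSaturation t S)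
  have hsmul : MvPolynomial.C (t ^ N • a) = t ^ N • MvPolynomial.C a :=
    map_smul (IsScalarTower.toAlgHom R A (MvPolynomial τ A)) _ _
  exact mem_powSaturation.mpr ⟨N, hsmul ▸ hC _ hN⟩

theorem nonempty_equiv_of_kaehler_basis_of_bijectiveModulo {I : Ideal R}
    [Nontrivial (A ⧸ I.map (algebraMap R A))] {f : MvPolynomial τ R →ₐ[R] A}
    (hf : BijectiveModulo I f) (b : Module.Basis ι A Ω[A⁄R]) : Nonempty (ι ≃ τ) := by
  obtain ⟨b'⟩ := nonempty_kaehler_basis_quotient I b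
  obtain ⟨c⟩ := nonempty_kaehler_basis_of_algEquiv
    (AlgEquiv.ofBijective _ (bijective_reduceModulo_iff.mpr hf))
    (KaehlerDifferential.mvPolynomialBasis (R ⧸ I) τ)
  exact ⟨b'.indexEquiv c⟩

variable [IsNoetherianRing R]

theorem injective_of_surjective_of_powSaturation_range_eq_top [Finite σ] (hR : IsSMulRegular R t)
    (hA : IsSMulRegular A t) (i : ι ↪ σ) {g : MvPolynomial σ R →ₐ[R] A}
    (hg : Function.Injective g) (hgt : powSaturation t g.range = ⊤)
    {f : MvPolynomial ι R →ₐ[R] A} (hf : Function.Surjective f) : Function.Injective f := by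
  let K := Localization.Away t
  have : IsNoetherianRing K := IsLocalization.isNoetherianRing (Submonoid.powers t) K ‹_›
  obtain ⟨ρ, -, hρg⟩ := exists_localizedCoordinates hR hA hg hgt
  let f' : MvPolynomial ι K →ₐ[K] MvPolynomial σ K :=
    MvPolynomial.aeval fun j => ρ (f (MvPolynomial.X j))
  have hf' (p) : f' (MvPolynomial.map (algebraMap R K) p) = ρ (f p) := by
    rw [MvPolynomial.aeval_map_algebraMap]
    exact DFunLike.congr_fun (MvPolynomial.algHom_ext fun j => by simp :
      MvPolynomial.aeval (fun j => ρ (f (MvPolynomial.X j))) = ρ.comp f) p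
  have hsurj : Function.Surjective f' := by
    rw [← AlgHom.range_eq_top, eq_top_iff, ← MvPolynomial.adjoin_range_X, Algebra.adjoin_le_iff]
    rintro _ ⟨j, rfl⟩
    obtain ⟨p, hp⟩ := hf (g (MvPolynomial.X j))
    exact ⟨_, (hf' p).trans (by rw [hp, hρg, MvPolynomial.map_X])⟩
  have hinj := mvPolynomial_injective_of_surjective i f' hsurj
  refine (injective_iff_map_eq_zero f).mpr fun p hp => ?_
  refine MvPolynomial.map_injective _ (injective_algebraMap_away hR) (hinj ?_)
  rw [hf', hp, map_zero, map_zero, map_zero]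

theorem bijectiveModulo_of_rangeModulo_eq_top [Finite τ] {I : Ideal R}
    {f : MvPolynomial τ R →ₐ[R] A} (hf : BijectiveModulo I f) (b : Module.Basis ι A Ω[A⁄R])
    {F : MvPolynomial (τ ⊕ ι) R →ₐ[R] MvPolynomial τ A} (hF : rangeModulo I F = ⊤) :
    BijectiveModulo I F := by
  rcases subsingleton_or_nontrivial (A ⧸ I.map (algebraMap R A)) with h | h
  · have : Subsingleton (R ⧸ I) :=
      ((bijective_reduceModulo_iff.mpr hf).1.comp (MvPolynomial.C_injective τ (R ⧸ I))).subsingleton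
    exact BijectiveModulo.of_subsingleton_quotient F
  · obtain ⟨i⟩ := nonempty_equiv_of_kaehler_basis_of_bijectiveModulo hf b
    have hκ := (hf.mapAlgHom τ).comp
      (BijectiveModulo.of_bijective I (f := (MvPolynomial.sumAlgEquiv R τ τ).toAlgHom)
        (MvPolynomial.sumAlgEquiv R τ τ).bijective)
    exact BijectiveModulo.of_rangeModulo_eq_top ((Equiv.refl τ).sumCongr i).toEmbedding hκ hF

theorem injective_of_surjective_of_kaehler_basis [Finite σ] [Finite τ] [Finite ι]
    [Algebra.FiniteType R A] (hR : IsSMulRegular R t) (hA : IsSMulRegular A t)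
    {g : MvPolynomial σ R →ₐ[R] A} (hg : Function.Injective g) (hgt : powSaturation t g.range = ⊤)
    (b : Module.Basis ι A Ω[A⁄R]) {F : MvPolynomial (τ ⊕ ι) R →ₐ[R] MvPolynomial τ A}
    (hF : Function.Surjective F) : Function.Injective F := by
  rcases subsingleton_or_nontrivial A with h | h
  · have : Subsingleton R := (hg.comp (MvPolynomial.C_injective σ R)).subsingleton
    exact Function.injective_of_subsingleton F
  · obtain ⟨i⟩ := exists_embedding_of_kaehler_basis hA g hgt b
    let G := (MvPolynomial.mapAlgHom (σ := τ) g).comp (MvPolynomial.sumAlgEquiv R τ σ).toAlgHom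
    have hG : Function.Injective G :=
      (MvPolynomial.map_injective _ hg).comp (MvPolynomial.sumAlgEquiv R τ σ).injective
    have hGt : powSaturation t G.range = ⊤ := by
      rw [AlgHom.range_comp,
        (AlgHom.range_eq_top _).mpr (MvPolynomial.sumAlgEquiv R τ σ).surjective,
        Algebra.map_top]
      refine powSaturation_mvPolynomial_eq_top hgt ?_ fun j => ⟨MvPolynomial.X j, by simp⟩
      rintro _ ⟨p, rfl⟩
      exact ⟨MvPolynomial.C p, by simp⟩
    exact injective_of_surjective_of_powSaturation_range_eq_top hR (isSMulRegular_mvPolynomial hA)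
      ((Function.Embedding.refl τ).sumMap i) hG hGt hF

theorem exists_bijective_of_bijectiveModulo_span [Finite σ] [Finite τ] [Finite ι]
    [Algebra.FiniteType R A] (hR : IsSMulRegular R t) (hA : IsSMulRegular A t)
    {f : MvPolynomial τ R →ₐ[R] A} (hf : BijectiveModulo (Ideal.span {t}) f)
    {g : MvPolynomial σ R →ₐ[R] A} (hg : Function.Injective g) (hgt : powSaturation t g.range = ⊤)
    (b : Module.Basis ι A Ω[A⁄R]) :
    ∃ F : MvPolynomial (τ ⊕ ι) R →ₐ[R] MvPolynomial τ A, Function.Bijective F := by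
  have ht := isSMulRegular_mvPolynomial (σ := τ) hA
  obtain ⟨e, he⟩ := exists_pow_smul_kaehler_mem_span g hgt
  obtain ⟨ψ, hψ⟩ := exists_algHom_sub_mem (isSMulRegular_mvPolynomial hR) hA hf hg hgt (e + 1)
  have hψf (p) : ∃ q, t ^ (e + 1) • q = ψ (f p) - p := mem_map_span_singleton.mp <|
    (hf.pow hA (e + 1)).mem_of_map_mem _ <| by
      simpa only [map_sub, neg_sub] using neg_mem (hψ (f p))
  have hcong (a : A) : ∃ v, MvPolynomial.C a =
      perturbation f (t ^ (e + 1)) (ψ a) + t ^ (e + 1) • v := by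
    obtain ⟨v, hv⟩ := mem_map_span_singleton.mp (C_sub_perturbation_mem f (t ^ (e + 1)) (ψ a))
    obtain ⟨w, hw⟩ := mem_map_span_singleton.mp (hψ a)
    refine ⟨v + MvPolynomial.C w, ?_⟩
    have hsmul (a : A) : MvPolynomial.C (t ^ (e + 1) • a) =
        t ^ (e + 1) • MvPolynomial.C (σ := τ) a :=
      map_smul (IsScalarTower.toAlgHom R A (MvPolynomial τ A)) _ _
    rw [smul_add, hv, ← hsmul, hw, map_sub]
    ring
  choose d hd using hcong
  obtain ⟨η, hηg, hηd⟩ := exists_semilinearMap_kaehler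
    (χ := (perturbation f (t ^ (e + 1))).comp ψ) ht
    (linearIndependent_kaehler_D hR hA hg hgt) he hd
  let F := gluingMap f (t ^ (e + 1)) (η ∘ b)
  have hmod : BijectiveModulo (Ideal.span {t}) F := bijectiveModulo_of_rangeModulo_eq_top hf b
    (rangeModulo_gluingMap_eq_top hd b ht hηd hψf)
  have hsurj : Function.Surjective F := hmod.surjective_of_powSaturation_range_eq_top ht
    (powSaturation_range_gluingMap_eq_top hd b hgt hηg)
  exact ⟨F, injective_of_surjective_of_kaehler_basis hR hA hg hgt b hsurj, hsurj⟩

end GluingTheorem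

section GluingModulo

variable {R A : Type*} [CommRing R] [CommRing A] [Algebra R A] {I : Ideal R} {σ τ ι : Type*}

theorem map_mk_mvPolynomial_eq_zero_iff {v : MvPolynomial τ A} :
    MvPolynomial.map (Ideal.Quotient.mk (I.map (algebraMap R A))) v = 0 ↔
      v ∈ I.map (algebraMap R (MvPolynomial τ A)) := by
  rw [map_mk_eq_zero_iff, MvPolynomial.algebraMap_eq, Ideal.map_map,
    ← MvPolynomial.algebraMap_eq, ← IsScalarTower.algebraMap_eq]

theorem exists_bijectiveModulo_of_bijective_reduction
    {F : MvPolynomial ι (R ⧸ I) →ₐ[R ⧸ I] MvPolynomial τ (A ⧸ I.map (algebraMap R A))}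
    (hF : Function.Bijective F) :
    ∃ F' : MvPolynomial ι R →ₐ[R] MvPolynomial τ A, BijectiveModulo I F' := by
  let π := MvPolynomial.map (σ := τ) (Ideal.Quotient.mk (I.map (algebraMap R A)))
  choose y hy using fun i => map_mk_surjective (F (MvPolynomial.X i))
  let F' : MvPolynomial ι R →ₐ[R] MvPolynomial τ A := MvPolynomial.aeval y
  have hcomp (p) : π (F' p) = F (MvPolynomial.map (Ideal.Quotient.mk I) p) := by
    suffices h : π.comp F'.toRingHom =
        F.toRingHom.comp (MvPolynomial.map (Ideal.Quotient.mk I)) from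
      RingHom.congr_fun h p
    refine MvPolynomial.ringHom_ext (fun r => ?_) fun i => by simp [F', π, hy]
    simp only [AlgHom.toRingHom_eq_coe, RingHom.comp_apply, RingHom.coe_coe, MvPolynomial.map_C]
    rw [← MvPolynomial.algebraMap_eq, ← MvPolynomial.algebraMap_eq, AlgHom.commutes,
      AlgHom.commutes, MvPolynomial.algebraMap_apply, MvPolynomial.map_C]
    rfl
  refine ⟨F', fun v => ?_, fun p hp => ?_⟩
  · obtain ⟨p, hp⟩ := hF.2 (π v)
    obtain ⟨p, rfl⟩ := map_mk_surjective p
    refine ⟨p, map_mk_mvPolynomial_eq_zero_iff.mp ?_⟩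
    rw [map_sub, ← hp, sub_eq_zero]
    exact (hcomp p).symm
  · rw [← map_mk_eq_zero_iff]
    apply hF.1
    rw [← hcomp, map_zero]
    exact map_mk_mvPolynomial_eq_zero_iff.mpr hp

theorem injective_reduceModulo {g : MvPolynomial σ R →ₐ[R] A}
    (hg : ∀ p, g p ∈ I.map (algebraMap R A) → p ∈ I.map (algebraMap R (MvPolynomial σ R))) :
    Function.Injective (reduceModulo I g) := by
  refine (injective_iff_map_eq_zero _).mpr fun p hp => ?_
  obtain ⟨p, rfl⟩ := map_mk_surjective p
  rw [reduceModulo_map_mk, Ideal.Quotient.eq_zero_iff_mem] at hp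
  exact map_mk_eq_zero_iff.mpr (hg p hp)

theorem powSaturation_range_reduceModulo_eq_top {t : R} {g : MvPolynomial σ R →ₐ[R] A}
    (hgt : powSaturation t (rangeModulo I g) = ⊤) :
    powSaturation (Ideal.Quotient.mk I t) (reduceModulo I g).range = ⊤ := by
  rw [eq_top_iff]
  rintro a -
  obtain ⟨a, rfl⟩ := Ideal.Quotient.mk_surjective a
  obtain ⟨N, hN⟩ := mem_powSaturation.mp (hgt ▸ Algebra.mem_top : a ∈ _)
  obtain ⟨p, hp⟩ := mem_rangeModulo.mp hN
  refine mem_powSaturation.mpr ⟨N, MvPolynomial.map (Ideal.Quotient.mk I) p, ?_⟩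
  rw [← map_pow, Ideal.Quotient.mk_smul_mk_quotient_map_quotient, ← Algebra.smul_def]
  exact (reduceModulo_map_mk g p).trans (Ideal.Quotient.eq.mpr hp).symm

theorem exists_bijectiveModulo_of_bijectiveModulo_sup_span [IsNoetherianRing R] [Finite σ]
    [Finite τ] [Finite ι] [Algebra.FiniteType R A] {t : R} (hR : IsSMulRegular (R ⧸ I) t)
    (hA : IsSMulRegular (A ⧸ I.map (algebraMap R A)) t)
    {f : MvPolynomial τ R →ₐ[R] A} (hf : BijectiveModulo (I ⊔ Ideal.span {t}) f)
    {g : MvPolynomial σ R →ₐ[R] A}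
    (hg : ∀ p, g p ∈ I.map (algebraMap R A) → p ∈ I.map (algebraMap R (MvPolynomial σ R)))
    (hgt : powSaturation t (rangeModulo I g) = ⊤) (b : Module.Basis ι A Ω[A⁄R]) :
    ∃ F : MvPolynomial (τ ⊕ ι) R →ₐ[R] MvPolynomial τ A, BijectiveModulo I F := by
  obtain ⟨b'⟩ := nonempty_kaehler_basis_quotient I b
  have : Algebra.FiniteType (R ⧸ I) (A ⧸ I.map (algebraMap R A)) :=
    Algebra.FiniteType.of_restrictScalars_finiteType R _ _
  have hregR : IsSMulRegular (R ⧸ I) (Ideal.Quotient.mk I t) :=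
    (isSMulRegular_algebraMap_iff _).mpr hR
  have hregA : IsSMulRegular (A ⧸ I.map (algebraMap R A)) (Ideal.Quotient.mk I t) :=
    (isSMulRegular_algebraMap_iff _).mpr hA
  obtain ⟨F, hF⟩ := exists_bijective_of_bijectiveModulo_span hregR hregA hf.reduceModulo
    (injective_reduceModulo hg) (powSaturation_range_reduceModulo_eq_top hgt) b'
  exact exists_bijectiveModulo_of_bijective_reduction hF

end GluingModulo

section Flat

variable {R P M : Type*} [CommRing R] [CommRing P] [Algebra R P] [CommRing M] [Algebra R M]
  {I : Ideal R} {t : R}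

theorem mem_map_colon_of_smul_mem_map [Module.Flat R M] {y : M}
    (h : t • y ∈ I.map (algebraMap R M)) : y ∈ (I.colon {t}).map (algebraMap R M) := by
  rw [Ideal.map, Ideal.span, Submodule.mem_span_image_iff_exists_fun] at h
  obtain ⟨s, hs, c, hc⟩ := h
  let coeff : Option s → R := fun o => o.elim t fun i => -i.1
  let vec : Option s → M := fun o => o.elim y c
  have hrel : ∑ o, coeff o • vec o = 0 := by
    rw [Fintype.sum_option, add_eq_zero_iff_eq_neg, ← Finset.sum_neg_distrib]
    simp only [coeff, vec, Option.elim, neg_smul, neg_neg]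
    exact hc.symm.trans <| Finset.sum_congr rfl fun i _ => by
      rw [smul_eq_mul, mul_comm, Algebra.smul_def]
  obtain ⟨k, a, z, hy, ha⟩ :=
    Module.Flat.isTrivialRelation_of_sum_smul_eq_zero (R := R) (M := M) hrel
  rw [show y = ∑ j, a none j • z j from hy none]
  refine sum_mem fun j _ => ?_
  rw [Algebra.smul_def]
  refine Ideal.mul_mem_right _ _ (Ideal.mem_map_of_mem _ (Submodule.mem_colon_singleton.mpr ?_))
  have hj := ha j
  rw [Fintype.sum_option] at hj
  rw [smul_eq_mul, mul_comm]
  change coeff none * a none j ∈ I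
  rw [eq_neg_of_add_eq_zero_left hj]
  exact neg_mem (sum_mem fun i _ => Ideal.mul_mem_right _ _ (neg_mem (hs i.2)))

theorem smul_mem_map_of_mem_map_colon {y : M} (h : y ∈ (I.colon {t}).map (algebraMap R M)) :
    t • y ∈ I.map (algebraMap R M) := by
  have hle : (I.colon {t}).map (algebraMap R M) ≤
      (I.map (algebraMap R M)).colon {algebraMap R M t} := by
    refine Ideal.map_le_iff_le_comap.mpr fun r hr => Submodule.mem_colon_singleton.mpr ?_
    rw [smul_eq_mul, ← map_mul]
    exact Ideal.mem_map_of_mem _ (Submodule.mem_colon_singleton.mp hr)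
  rw [Algebra.smul_def, mul_comm]
  exact Submodule.mem_colon_singleton.mp (hle h)

theorem colon_eq_of_isSMulRegular (ht : IsSMulRegular (R ⧸ I) t) : I.colon {t} = I := by
  ext r
  rw [Submodule.mem_colon_singleton, smul_eq_mul]
  refine ⟨fun h => ?_, fun h => Ideal.mul_mem_right _ _ h⟩
  rw [← Ideal.Quotient.eq_zero_iff_mem] at h ⊢
  exact ht.right_eq_zero_of_smul (by rw [Algebra.smul_def, mul_comm, ← h, map_mul]; rfl)

theorem mem_map_of_smul_mem_map [Module.Flat R M] (ht : IsSMulRegular (R ⧸ I) t) {y : M}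
    (h : t • y ∈ I.map (algebraMap R M)) : y ∈ I.map (algebraMap R M) := by
  rw [← colon_eq_of_isSMulRegular ht]
  exact mem_map_colon_of_smul_mem_map h

theorem isSMulRegular_quotient_map [Module.Flat R M] (ht : IsSMulRegular (R ⧸ I) t) :
    IsSMulRegular (M ⧸ I.map (algebraMap R M)) t := by
  refine IsSMulRegular.of_right_eq_zero_of_smul ?_
  intro y hy
  obtain ⟨y, rfl⟩ := Ideal.Quotient.mk_surjective y
  exact Ideal.Quotient.eq_zero_iff_mem.mpr
    (mem_map_of_smul_mem_map ht (Ideal.Quotient.eq_zero_iff_mem.mp hy))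

theorem exists_mem_map_sub_mem {f : P →ₐ[R] M}
    (hf : ∀ v, ∃ p, v - f p ∈ I.map (algebraMap R M)) (J : Ideal R) {y : M}
    (hy : y ∈ J.map (algebraMap R M)) :
    ∃ p ∈ J.map (algebraMap R P), y - f p ∈ I.map (algebraMap R M) := by
  induction hy using Submodule.span_induction with
  | mem y hy =>
    obtain ⟨r, hr, rfl⟩ := hy
    exact ⟨algebraMap R P r, Ideal.mem_map_of_mem _ hr, by simp⟩
  | zero => exact ⟨0, zero_mem _, by simp⟩
  | add y z _ _ hy hz =>
    obtain ⟨p, hp, hp'⟩ := hy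
    obtain ⟨q, hq, hq'⟩ := hz
    refine ⟨p + q, add_mem hp hq, ?_⟩
    rw [map_add, add_sub_add_comm]
    exact add_mem hp' hq'
  | smul a y _ hy =>
    obtain ⟨p, hp, hp'⟩ := hy
    obtain ⟨q, hq⟩ := hf a
    refine ⟨q * p, Ideal.mul_mem_left _ _ hp, ?_⟩
    have : a • y - f (q * p) = a * (y - f p) + (a - f q) * f p := by
      rw [map_mul, smul_eq_mul]; ring
    rw [this]
    exact add_mem (Ideal.mul_mem_left _ _ hp') (Ideal.mul_mem_right _ _ hq)

theorem BijectiveModulo.of_sup_span_of_sq_mem [Module.Flat R M] (ht : t ^ 2 ∈ I) {f : P →ₐ[R] M}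
    (hf : BijectiveModulo (I ⊔ Ideal.span {t}) f) : BijectiveModulo I f := by
  have hle : I ⊔ Ideal.span {t} ≤ I.colon {t} := by
    refine sup_le (fun r hr => ?_) ((Ideal.span_singleton_le_iff_mem _).mpr ?_)
    · exact Submodule.mem_colon_singleton.mpr (Ideal.mul_mem_right _ _ hr)
    · exact Submodule.mem_colon_singleton.mpr (by rwa [smul_eq_mul, ← sq])
  have hsurj (v : M) : ∃ p, v - f p ∈ I.map (algebraMap R M) := by
    obtain ⟨p, hp⟩ := hf.exists_sub_mem v
    obtain ⟨y, hy⟩ := mem_map_sup_span_singleton.mp hp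
    obtain ⟨q, hq⟩ := hf.exists_sub_mem y
    refine ⟨p + t • q, ?_⟩
    have hsplit : v - f (p + t • q) = (v - f p - t • y) + t • (y - f q) := by
      rw [map_add, map_smul, smul_sub]
      ring
    rw [hsplit]
    exact add_mem hy (smul_mem_map_of_mem_map_colon (Ideal.map_mono hle hq))
  refine ⟨hsurj, fun p hp => ?_⟩
  have hmono : I.map (algebraMap R M) ≤ (I ⊔ Ideal.span {t}).map (algebraMap R M) :=
    Ideal.map_mono le_sup_left
  obtain ⟨x, hx⟩ := mem_map_sup_span_singleton.mp (hf.mem_of_map_mem p (hmono hp))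
  have htx : t • f x ∈ I.map (algebraMap R M) := by
    simpa using sub_mem hp (map_mem_map_algebraMap f hx)
  obtain ⟨q, hq, hxq⟩ := exists_mem_map_sub_mem hsurj _ (mem_map_colon_of_smul_mem_map htx)
  have hx' : x ∈ (I.colon {t}).map (algebraMap R P) := by
    have := Ideal.map_mono hle (hf.mem_of_map_mem (x - q) (hmono (by rwa [map_sub])))
    simpa using add_mem this hq
  simpa using add_mem hx (smul_mem_map_of_mem_map_colon hx')

end Flat

section GenericallyBijective

variable {R P M : Type*} [CommRing R] [CommRing P] [Algebra R P] [CommRing M] [Algebra R M]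

/-- `f` becomes bijective modulo `I` after inverting the elements of `R` that are regular on
`R / I`. For radical `I` this can be tested on the fibres at the minimal primes of `I`. No
denominator is needed for injectivity when `P` is flat: such elements stay regular on `P / I P`. -/
structure GenericallyBijectiveModulo (I : Ideal R) (f : P →ₐ[R] M) : Prop where
  exists_smul_mem : ∀ v : M, ∃ s : R, IsSMulRegular (R ⧸ I) s ∧ s • v ∈ rangeModulo I f
  mem_of_map_mem : ∀ p : P, f p ∈ I.map (algebraMap R M) → p ∈ I.map (algebraMap R P)

theorem GenericallyBijectiveModulo.congr {I : Ideal R} {f g : P →ₐ[R] M}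
    (hfg : ∀ p, f p - g p ∈ I.map (algebraMap R M)) (hf : GenericallyBijectiveModulo I f) :
    GenericallyBijectiveModulo I g where
  exists_smul_mem v := by
    obtain ⟨s, hs, hv⟩ := hf.exists_smul_mem v
    obtain ⟨p, hp⟩ := mem_rangeModulo.mp hv
    exact ⟨s, hs, mem_rangeModulo.mpr ⟨p, by simpa using add_mem hp (hfg p)⟩⟩
  mem_of_map_mem p hp := hf.mem_of_map_mem p (by simpa using add_mem (hfg p) hp)

theorem isSMulRegular_quotient_iff_notMem {p : Ideal R} [hp : p.IsPrime] {s : R} :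
    IsSMulRegular (R ⧸ p) s ↔ s ∉ p := by
  rw [← isSMulRegular_algebraMap_iff (R ⧸ p), ← isLeftRegular_iff,
    isLeftRegular_iff_isRegular, isRegular_iff_ne_zero', Ideal.Quotient.algebraMap_eq, Ne,
    Ideal.Quotient.eq_zero_iff_mem]

section ResidueField

variable (p : Ideal R) [p.IsPrime]

theorem one_tmul_eq_zero_iff [Module.Flat R M] {m : M} :
    (1 : p.ResidueField) ⊗ₜ[R] m = 0 ↔ m ∈ p.map (algebraMap R M) := by
  let i := (IsScalarTower.toAlgHom R (R ⧸ p) p.ResidueField).toLinearMap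
  have hi : Function.Injective (i.rTensor M) :=
    Module.Flat.rTensor_preserves_injective_linearMap _ p.injective_algebraMap_quotient_residueField
  have hm : (1 : p.ResidueField) ⊗ₜ[R] m = i.rTensor M (1 ⊗ₜ m) := by simp [i]
  have hquot := TensorProduct.quotTensorEquivQuotSMul_mk_tmul (M := M) p 1 m
  rw [map_one, one_smul] at hquot
  rw [hm, map_eq_zero_iff _ hi, ← (TensorProduct.quotTensorEquivQuotSMul M p).map_eq_zero_iff,
    hquot, Submodule.Quotient.mk_eq_zero, Ideal.smul_top_eq_map]
  rfl

theorem GenericallyBijectiveModulo.of_bijective_residueField [Module.Flat R P] [Module.Flat R M]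
    {f : P →ₐ[R] M} (hf : Function.Bijective
      (Algebra.TensorProduct.map (AlgHom.id R p.ResidueField) f)) :
    GenericallyBijectiveModulo p f where
  exists_smul_mem v := by
    obtain ⟨z, hz⟩ := hf.2 (1 ⊗ₜ v)
    obtain ⟨s, hs, q, hq⟩ := Ideal.Fiber.exists_smul_eq_one_tmul p z
    refine ⟨s, isSMulRegular_quotient_iff_notMem.mpr hs, mem_rangeModulo.mpr ⟨q, ?_⟩⟩
    rw [← one_tmul_eq_zero_iff p, TensorProduct.tmul_sub, TensorProduct.tmul_smul, ← hz, ← map_smul,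
      hq, Algebra.TensorProduct.map_tmul, map_one, sub_self]
  mem_of_map_mem q hq := by
    rw [← one_tmul_eq_zero_iff p] at hq ⊢
    exact hf.1 (by simpa using hq)

end ResidueField

section MinimalPrimes

variable {I : Ideal R}

theorem isSMulRegular_quotient_of_notMem_minimalPrimes (hI : I.IsRadical) {s : R}
    (hs : ∀ p ∈ I.minimalPrimes, s ∉ p) : IsSMulRegular (R ⧸ I) s := by
  refine IsSMulRegular.of_right_eq_zero_of_smul fun r hr => ?_
  obtain ⟨r, rfl⟩ := Ideal.Quotient.mk_surjective r
  have hsr : s * r ∈ I := Ideal.Quotient.eq_zero_iff_mem.mp hr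
  rw [Ideal.Quotient.eq_zero_iff_mem, ← hI.radical, ← Ideal.sInf_minimalPrimes, Submodule.mem_sInf]
  exact fun p hp => (hp.1.1.mem_or_mem (hp.1.2 hsr)).resolve_left (hs p hp)

theorem exists_notMem_minimalPrime_mul_mem [IsNoetherianRing R] (hI : I.IsRadical)
    (p : I.minimalPrimes) : ∃ e ∉ p.1, ∀ r ∈ p.1, e * r ∈ I := by
  have hcolon : I.colon {(1 : R)} = I := by
    ext
    simp
  have hp : p.1 ∈ (I.colon {(1 : R)}).minimalPrimes := by
    rw [hcolon]
    exact p.2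
  obtain ⟨e, he⟩ := Submodule.exists_eq_colon_of_mem_minimalPrimes hp
  have hmem (r) : r ∈ p.1 ↔ e * r ∈ I := by
    rw [he, Submodule.mem_colon_singleton, smul_eq_mul, mul_comm]
  refine ⟨e, fun hep => p.2.1.1.one_notMem ((hmem 1).mpr ?_), fun r => (hmem r).mp⟩
  rw [mul_one]
  exact hI ⟨2, by rw [sq]; exact (hmem e).mp hep⟩

theorem mem_minimalPrime_of_ne {p q : I.minimalPrimes} (hpq : p ≠ q) {e : R}
    (he : ∀ r ∈ p.1, e * r ∈ I) : e ∈ q.1 := by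
  obtain ⟨r, hrp, hrq⟩ : ∃ r ∈ p.1, r ∉ q.1 := SetLike.not_le_iff_exists.mp fun hle =>
    hpq (Subtype.ext (le_antisymm hle (q.2.2 p.2.1 hle)))
  exact (q.2.1.1.mem_or_mem (q.2.1.2 (he r hrp))).resolve_right hrq

theorem isSMulRegular_sum_minimalPrimes [Fintype I.minimalPrimes] (hI : I.IsRadical)
    {e : I.minimalPrimes → R} (he : ∀ p, e p ∉ p.1) (hmul : ∀ p, ∀ r ∈ p.1, e p * r ∈ I)
    {s : I.minimalPrimes → R} (hs : ∀ p, s p ∉ p.1) :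
    IsSMulRegular (R ⧸ I) (∑ p, e p * s p) := by
  classical
  refine isSMulRegular_quotient_of_notMem_minimalPrimes hI fun q hq hsum => ?_
  lift q to I.minimalPrimes using hq
  have hrest : ∑ p ∈ Finset.univ.erase q, e p * s p ∈ q.1 := sum_mem fun p hp =>
    Ideal.mul_mem_right _ _ (mem_minimalPrime_of_ne (Finset.ne_of_mem_erase hp) (hmul p))
  rw [← Finset.add_sum_erase _ _ (Finset.mem_univ q), Ideal.add_mem_iff_left _ hrest] at hsum
  exact (q.2.1.1.mem_or_mem hsum).elim (he q) (hs q)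

theorem smul_mem_map_of_forall_mul_mem {J : Ideal R} {e : R} (he : ∀ r ∈ J, e * r ∈ I) {y : M}
    (hy : y ∈ J.map (algebraMap R M)) : e • y ∈ I.map (algebraMap R M) := by
  refine smul_mem_map_of_mem_map_colon (Ideal.map_mono (fun r hr => ?_) hy)
  rw [Submodule.mem_colon_singleton, smul_eq_mul, mul_comm]
  exact he r hr

theorem GenericallyBijectiveModulo.of_minimalPrimes [IsNoetherianRing R] [Module.Flat R P]
    (hI : I.IsRadical) {f : P →ₐ[R] M}
    (hf : ∀ p ∈ I.minimalPrimes, GenericallyBijectiveModulo p f) :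
    GenericallyBijectiveModulo I f := by
  have := (Ideal.finite_minimalPrimes_of_isNoetherianRing R I).fintype
  choose e he hmul using exists_notMem_minimalPrime_mul_mem hI
  constructor
  · intro v
    choose s hs hv using fun p : I.minimalPrimes => (hf p p.2).exists_smul_mem v
    choose q hq using fun p => mem_rangeModulo.mp (hv p)
    refine ⟨∑ p, e p * s p, isSMulRegular_sum_minimalPrimes hI he hmul fun p => ?_,
      mem_rangeModulo.mpr ⟨∑ p, e p • q p, ?_⟩⟩
    · have := p.2.1.1
      exact isSMulRegular_quotient_iff_notMem.mp (hs p)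
    · rw [Finset.sum_smul, map_sum, ← Finset.sum_sub_distrib]
      refine sum_mem fun p _ => ?_
      rw [mul_smul, map_smul, ← smul_sub]
      exact smul_mem_map_of_forall_mul_mem (hmul p) (hq p)
  · intro q hq
    have hreg : IsSMulRegular (R ⧸ I) (∑ p, e p * 1) :=
      isSMulRegular_sum_minimalPrimes hI he hmul fun p => p.2.1.1.one_notMem
    refine mem_map_of_smul_mem_map hreg ?_
    rw [Finset.sum_smul]
    refine sum_mem fun p _ => ?_
    rw [mul_one]
    exact smul_mem_map_of_forall_mul_mem (hmul p)
      ((hf p p.2).mem_of_map_mem q (Ideal.map_mono p.2.1.2 hq))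

end MinimalPrimes

end GenericallyBijective

section Fibers

theorem bijective_aeval_units_smul_X {S σ : Type*} [CommRing S] (u : Sˣ) : Function.Bijective
    (MvPolynomial.aeval fun i => u • MvPolynomial.X i :
      MvPolynomial σ S →ₐ[S] MvPolynomial σ S) := by
  have hcomp (u : Sˣ) : (MvPolynomial.aeval fun i => u • MvPolynomial.X i).comp
      (MvPolynomial.aeval fun i => u⁻¹ • MvPolynomial.X i) =
        AlgHom.id S (MvPolynomial σ S) := by
    ext i : 1
    simp [Units.smul_def, smul_smul]
  refine Function.bijective_iff_has_inverse.mpr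
    ⟨MvPolynomial.aeval fun i => u⁻¹ • MvPolynomial.X i, fun p => ?_, fun p => ?_⟩
  · simpa using DFunLike.congr_fun (hcomp u⁻¹) p
  · exact DFunLike.congr_fun (hcomp u) p

theorem rTensorAlgEquiv_tmul {R S N σ : Type*} [CommRing R] [CommRing S] [CommRing N] [Algebra R S]
    [Algebra R N] (k : S) (q : MvPolynomial σ N) :
    MvPolynomial.rTensorAlgEquiv (k ⊗ₜ[R] q) =
      k • MvPolynomial.map (Algebra.TensorProduct.includeRight : N →ₐ[R] S ⊗[R] N) q := by
  ext n
  simp [MvPolynomial.coeff_map, TensorProduct.smul_tmul']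

variable {R B A : Type*} [CommRing R] [CommRing B] [CommRing A] [Algebra R B] [Algebra R A]
  [Algebra B A] [IsScalarTower R B A]

theorem exists_smul_eq_one_tmul_of_finite {ι : Type*} [Finite ι] (p : Ideal R) [hp : p.IsPrime]
    (z : ι → p.ResidueField ⊗[R] A) :
    ∃ s ∉ p, ∃ a : ι → A, ∀ i, s • z i = 1 ⊗ₜ a i := by
  classical
  have := Fintype.ofFinite ι
  choose s hs a ha using fun i => Ideal.Fiber.exists_smul_eq_one_tmul p (z i)
  refine ⟨∏ i, s i, fun h => ?_, fun i => (∏ j ∈ Finset.univ.erase i, s j) • a i, fun i => ?_⟩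
  · obtain ⟨i, -, hi⟩ := hp.prod_mem_iff.mp h
    exact hs i hi
  · rw [← Finset.prod_erase_mul _ _ (Finset.mem_univ i), mul_smul, ha, TensorProduct.tmul_smul]

theorem bijective_tensorProduct_map_aeval {K σ : Type*} [CommRing K] [Algebra R K] {x : σ → A}
    {ψ : MvPolynomial σ (K ⊗[R] B) →+* K ⊗[R] A} (hψ : Function.Bijective ψ)
    (hC : ∀ z, ψ (MvPolynomial.C z) = Algebra.TensorProduct.map (AlgHom.id R K)
      (IsScalarTower.toAlgHom R B A) z) (hX : ∀ i, ψ (MvPolynomial.X i) = 1 ⊗ₜ x i) :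
    Function.Bijective (Algebra.TensorProduct.map (AlgHom.id R K)
      ((MvPolynomial.aeval x : MvPolynomial σ B →ₐ[B] A).restrictScalars R)) := by
  have hone : (Algebra.TensorProduct.includeRight : A →ₐ[R] K ⊗[R] A).toRingHom.comp
      (MvPolynomial.aeval x : MvPolynomial σ B →ₐ[B] A).toRingHom =
        ψ.comp (MvPolynomial.map
          ((Algebra.TensorProduct.includeRight : B →ₐ[R] K ⊗[R] B) : B →+* K ⊗[R] B)) :=
    MvPolynomial.ringHom_ext (fun b => by simp [hC]) fun i => by simp [hX]
  have hcomp : Algebra.TensorProduct.map (AlgHom.id R K)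
      ((MvPolynomial.aeval x : MvPolynomial σ B →ₐ[B] A).restrictScalars R) =
        ψ ∘ MvPolynomial.rTensorAlgEquiv (R := R) (S := K) (N := B) := by
    funext z
    induction z using TensorProduct.induction_on with
    | zero => simp
    | tmul k q =>
      rw [Function.comp_apply, rTensorAlgEquiv_tmul, Algebra.smul_def,
        IsScalarTower.algebraMap_apply K (K ⊗[R] B)]
      have hq : 1 ⊗ₜ MvPolynomial.aeval x q = ψ (MvPolynomial.map _ q) := RingHom.congr_fun hone q
      rw [map_mul, MvPolynomial.algebraMap_eq, hC]
      simp [← hq]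
    | add y z hy hz =>
      rw [map_add, hy, hz]
      simp
  rw [hcomp]
  exact hψ.comp (AlgEquiv.bijective _)

theorem exists_genericallyBijectiveModulo_prime [Module.Flat R B] [Module.Flat R A] {d : ℕ}
    (h : FibersPolynomialOver R B A d) (p : Ideal R) [hp : p.IsPrime] {e : R} (he : e ∉ p) :
    ∃ x : Fin d → A, GenericallyBijectiveModulo p
      ((MvPolynomial.aeval fun i => e • x i :
        MvPolynomial (Fin d) B →ₐ[B] A).restrictScalars R) := by
  let K := p.ResidueField
  let : Algebra (K ⊗[R] B) (K ⊗[R] A) := (Algebra.TensorProduct.map (AlgHom.id R K)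
    (IsScalarTower.toAlgHom R B A)).toRingHom.toAlgebra
  obtain ⟨φ⟩ : Nonempty ((K ⊗[R] A) ≃ₐ[K ⊗[R] B] MvPolynomial (Fin d) (K ⊗[R] B)) := h p hp
  obtain ⟨s, hs, x, hx⟩ := exists_smul_eq_one_tmul_of_finite p fun i => φ.symm (MvPolynomial.X i)
  have hu : IsUnit (algebraMap R K (e * s)) := by
    rw [isUnit_iff_ne_zero, Ne, Ideal.algebraMap_residueField_eq_zero]
    exact fun h => (hp.mem_or_mem h).elim he hs
  obtain ⟨u, hu⟩ : IsUnit (algebraMap R (K ⊗[R] B) (e * s)) := by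
    rw [IsScalarTower.algebraMap_apply R K]
    exact hu.map _
  have : Module.Flat R (MvPolynomial (Fin d) B) := Module.Flat.trans R B _
  let ψ : MvPolynomial (Fin d) (K ⊗[R] B) →ₐ[K ⊗[R] B] K ⊗[R] A :=
    φ.symm.toAlgHom.comp (MvPolynomial.aeval fun i => u • MvPolynomial.X i)
  have hψ : Function.Bijective ψ := φ.symm.bijective.comp (bijective_aeval_units_smul_X u)
  refine ⟨x, .of_bijective_residueField p (bijective_tensorProduct_map_aeval
    (ψ := ψ.toRingHom) hψ (fun z => ψ.commutes z) fun i => ?_)⟩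
  have htower : IsScalarTower R (K ⊗[R] B) (K ⊗[R] A) := .of_algebraMap_eq fun r =>
    ((Algebra.TensorProduct.map (AlgHom.id R K) (IsScalarTower.toAlgHom R B A)).commutes r).symm
  change φ.symm (MvPolynomial.aeval _ (MvPolynomial.X i)) = _
  rw [MvPolynomial.aeval_X, Units.smul_def, map_smul, hu, algebraMap_smul, mul_smul, hx,
    TensorProduct.tmul_smul]

end Fibers

section GenericCoordinates

variable {R B A : Type*} [CommRing R] [CommRing B] [CommRing A] [Algebra R B] [Algebra R A]
  [Algebra B A] [IsScalarTower R B A]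

variable (B) in
theorem map_map_algebraMap (I : Ideal R) :
    (I.map (algebraMap R B)).map (algebraMap B A) = I.map (algebraMap R A) := by
  rw [Ideal.map_map, ← IsScalarTower.algebraMap_eq]

theorem bijectiveModulo_map_iff {P : Type*} [CommRing P] [Algebra R P] [Algebra B P]
    [IsScalarTower R B P] {I : Ideal R} {f : P →ₐ[B] A} :
    BijectiveModulo (I.map (algebraMap R B)) f ↔ BijectiveModulo I (f.restrictScalars R) := by
  have hA := map_map_algebraMap (A := A) B I
  have hP := map_map_algebraMap (A := P) B I
  constructor <;> rintro ⟨h, h'⟩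
  · exact ⟨hA ▸ h, hP ▸ hA ▸ h'⟩
  · exact ⟨hA.symm ▸ h, hP.symm ▸ hA.symm ▸ h'⟩

theorem exists_genericallyBijectiveModulo_radical [IsNoetherianRing R] [Module.Flat R B]
    [Module.Flat R A] {d : ℕ} (h : FibersPolynomialOver R B A d) {I : Ideal R} (hI : I.IsRadical) :
    ∃ x : Fin d → A, GenericallyBijectiveModulo I
      ((MvPolynomial.aeval x : MvPolynomial (Fin d) B →ₐ[B] A).restrictScalars R) := by
  classical
  have := (Ideal.finite_minimalPrimes_of_isNoetherianRing R I).fintype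
  have : Module.Flat R (MvPolynomial (Fin d) B) := Module.Flat.trans R B _
  choose e he hmul using exists_notMem_minimalPrime_mul_mem hI
  choose x hx using fun p : I.minimalPrimes =>
    have := p.2.1.1
    exists_genericallyBijectiveModulo_prime h p.1 (he p)
  refine ⟨fun i => ∑ p, e p • x p i, .of_minimalPrimes hI fun q hq => ?_⟩
  lift q to I.minimalPrimes using hq
  refine (hx q).congr fun y => sub_mem_of_adjoin_eq_top (u := MvPolynomial.aeval _)
    (v := MvPolynomial.aeval _) (MvPolynomial.adjoin_range_X (R := B)) ?_ y
  rintro _ ⟨i, rfl⟩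
  simp only [MvPolynomial.aeval_X]
  rw [← Finset.add_sum_erase _ _ (Finset.mem_univ q), sub_add_cancel_left]
  refine neg_mem (sum_mem fun p hp => ?_)
  rw [Algebra.smul_def]
  exact Ideal.mul_mem_right _ _ (Ideal.mem_map_of_mem _
    (mem_minimalPrime_of_ne (Finset.ne_of_mem_erase hp) (hmul p)))

theorem GenericallyBijectiveModulo.exists_powSaturation_eq_top {I : Ideal R} {P : Type*}
    [CommRing P] [Algebra R P] [Algebra B P] [IsScalarTower R B P] [Algebra.FiniteType B A]
    {g : P →ₐ[B] A} (hg : GenericallyBijectiveModulo I (g.restrictScalars R)) :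
    ∃ t : R, IsSMulRegular (R ⧸ I) t ∧ powSaturation (algebraMap R B t)
      (rangeModulo (I.map (algebraMap R B)) g) = ⊤ := by
  classical
  obtain ⟨S, hS⟩ := Algebra.FiniteType.out (R := B) (A := A)
  choose s hs hv using hg.exists_smul_mem
  refine ⟨∏ a ∈ S, s a, ?_, ?_⟩
  · exact Finset.prod_induction s _ (fun _ _ h h' => h.mul h') (.one _) fun a _ => hs a
  · rw [eq_top_iff, ← hS, Algebra.adjoin_le_iff]
    intro a ha
    refine mem_powSaturation.mpr ⟨1, ?_⟩
    obtain ⟨p, hp⟩ := mem_rangeModulo.mp (hv a)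
    refine mem_rangeModulo.mpr ⟨(∏ b ∈ S.erase a, s b) • p, ?_⟩
    rw [pow_one, algebraMap_smul, ← Finset.prod_erase_mul _ _ ha, mul_smul,
      ← AlgHom.restrictScalars_apply R, map_smul, ← smul_sub, map_map_algebraMap, Algebra.smul_def]
    exact Ideal.mul_mem_left _ _ hp

/-- After inverting `t`, the algebra `A / I A` becomes a polynomial ring in finitely many variables
over `R / I`: the coordinates away from `t` in the gluing argument. The coordinates are chosen in
`A` itself, so that no localization appears. -/
def IsPolynomialModuloAway (I : Ideal R) (t : R) (A : Type*) [CommRing A] [Algebra R A] : Prop :=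
  ∃ (σ : Type) (_ : Finite σ) (g : MvPolynomial σ R →ₐ[R] A),
    (∀ p, g p ∈ I.map (algebraMap R A) → p ∈ I.map (algebraMap R (MvPolynomial σ R))) ∧
      powSaturation t (rangeModulo I g) = ⊤

theorem IsPolynomialModuloAway.mvPolynomial {I : Ideal R} {t : R} (τ : Type) [Finite τ]
    (h : IsPolynomialModuloAway I t A) : IsPolynomialModuloAway I t (MvPolynomial τ A) := by
  obtain ⟨σ, _, g, hg, hgt⟩ := h
  let e := MvPolynomial.sumAlgEquiv R τ σ
  let G := (MvPolynomial.mapAlgHom (σ := τ) g).comp e.toAlgHom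
  refine ⟨τ ⊕ σ, inferInstance, G, fun p hp => ?_, ?_⟩
  · have he : e p ∈ I.map (algebraMap R _) := by
      rw [mem_map_algebraMap_mvPolynomial] at hp ⊢
      exact fun n => hg _ (by simpa [G, MvPolynomial.coeff_map] using hp n)
    simpa using map_mem_map_algebraMap e.symm.toAlgHom he
  · refine powSaturation_mvPolynomial_eq_top hgt (fun a ha => ?_) fun j =>
      range_le_rangeModulo ⟨MvPolynomial.X (Sum.inl j), by simp [G, e]⟩
    obtain ⟨p, hp⟩ := mem_rangeModulo.mp ha
    refine mem_rangeModulo.mpr ⟨e.symm (MvPolynomial.C p), ?_⟩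
    have := map_mem_map_algebraMap (IsScalarTower.toAlgHom R A (MvPolynomial τ A)) hp
    simpa [G, MvPolynomial.algebraMap_eq] using this

theorem exists_isPolynomialModuloAway [IsNoetherianRing R] [Module.Flat R B]
    [Module.Flat R A] [Algebra.FiniteType B A] {d : ℕ} (h : FibersPolynomialOver R B A d)
    {I : Ideal R} (hI : I.IsRadical) :
    ∃ t : R, IsSMulRegular (R ⧸ I) t ∧
      IsPolynomialModuloAway (I.map (algebraMap R B)) (algebraMap R B t) A := by
  obtain ⟨x, hx⟩ := exists_genericallyBijectiveModulo_radical h hI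
  obtain ⟨t, ht, htop⟩ := hx.exists_powSaturation_eq_top
  refine ⟨t, ht, Fin d, inferInstance, _, fun p hp => ?_, htop⟩
  rw [map_map_algebraMap] at hp ⊢
  exact hx.mem_of_map_mem p hp

end GenericCoordinates

section StablyFree

variable {A M N : Type*} [CommRing A] [AddCommGroup M] [Module A M] [AddCommGroup N] [Module A N]

theorem IsStablyFree.of_linearEquiv (e : M ≃ₗ[A] N) (h : IsStablyFree A M) : IsStablyFree A N := by
  obtain ⟨s, t, ⟨f⟩⟩ := h
  exact ⟨s, t, ⟨e.symm.prodCongr (.refl A _) ≪≫ₗ f⟩⟩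

theorem isStablyFree_of_basis_prod {ι κ : Type*} [Finite ι] [Finite κ] (c : Module.Basis κ A N)
    (b : Module.Basis ι A (M × N)) : IsStablyFree A M :=
  ⟨_, _, ⟨(LinearEquiv.refl A M).prodCongr (c.reindex (Finite.equivFin κ)).equivFun.symm ≪≫ₗ
    (b.reindex (Finite.equivFin ι)).equivFun⟩⟩

theorem IsStablyFree.baseChange (T : Type*) [CommRing T] [Algebra A T] (h : IsStablyFree A M) :
    IsStablyFree T (T ⊗[A] M) := by
  obtain ⟨s, t, ⟨e⟩⟩ := h
  exact ⟨s, t, ⟨(LinearEquiv.refl T _).prodCongr (piScalarRight A T T _).symm ≪≫ₗ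
    (prodRight A T T _ _).symm ≪≫ₗ e.baseChange A T _ _ ≪≫ₗ piScalarRight A T T _⟩⟩

theorem IsStablyFree.of_prod {ι : Type*} [Finite ι] (c : Module.Basis ι A N)
    (h : IsStablyFree A (N × M)) : IsStablyFree A M := by
  obtain ⟨s, t, ⟨e⟩⟩ := h
  exact isStablyFree_of_basis_prod ((Pi.basisFun A (Fin s)).prod c) <|
    (Pi.basisFun A (Fin t)).map
      (e.symm ≪≫ₗ LinearEquiv.prodAssoc A N M _ ≪≫ₗ LinearEquiv.prodComm A N _ ≪≫ₗ
        LinearEquiv.prodAssoc A M _ N)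

theorem IsStablyFree.projective (h : IsStablyFree A M) : Module.Projective A M := by
  obtain ⟨s, t, ⟨e⟩⟩ := h
  exact .of_split (e.toLinearMap ∘ₗ LinearMap.inl A M _) (LinearMap.fst A M _ ∘ₗ e.symm.toLinearMap)
    (by ext; simp)

end StablyFree

section SmoothExtension

variable {R B A : Type*} [CommRing R] [CommRing B] [CommRing A] [Algebra R B] [Algebra R A]
  [Algebra B A] [IsScalarTower R B A]

theorem nonempty_kaehler_equiv_prod
    (h : ∃ l : Ω[A⁄R] →ₗ[A] A ⊗[B] Ω[B⁄R],
      l ∘ₗ KaehlerDifferential.mapBaseChange R B A = LinearMap.id) :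
    Nonempty (Ω[A⁄R] ≃ₗ[A] (A ⊗[B] Ω[B⁄R]) × Ω[A⁄B]) := by
  obtain ⟨l, hl⟩ := h
  exact ⟨(Function.Exact.splitInjectiveEquiv (KaehlerDifferential.exact_mapBaseChange_map R B A)
    (KaehlerDifferential.map_surjective R B A) ⟨l, hl⟩).1⟩

variable (R B A) in
theorem exists_comp_mapBaseChange_eq_id [Algebra.FormallySmooth B A] :
    ∃ l : Ω[A⁄R] →ₗ[A] A ⊗[B] Ω[B⁄R],
      l ∘ₗ KaehlerDifferential.mapBaseChange R B A = LinearMap.id := by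
  have hinj : Function.Injective (KaehlerDifferential.mapBaseChange R B A) := by
    refine (injective_iff_map_eq_zero _).mpr fun x hx => ?_
    obtain ⟨y, rfl⟩ := (Algebra.H1Cotangent.exact_δ_mapBaseChange R B A x).mp hx
    rw [Subsingleton.elim y 0, map_zero]
  obtain ⟨e, he, -⟩ := Function.Exact.splitSurjectiveEquiv
    (KaehlerDifferential.exact_mapBaseChange_map R B A) hinj
    ⟨_, (Module.projective_lifting_property _ LinearMap.id
      (KaehlerDifferential.map_surjective R B A)).choose_spec⟩
  exact ⟨LinearMap.fst A _ _ ∘ₗ e.toLinearMap, by ext; simp [he]⟩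

theorem nonempty_kaehler_equiv_prod_mvPolynomial (τ : Type*) :
    Nonempty (Ω[MvPolynomial τ A⁄R] ≃ₗ[MvPolynomial τ A]
      (MvPolynomial τ A ⊗[A] Ω[A⁄R]) × Ω[MvPolynomial τ A⁄A]) :=
  nonempty_kaehler_equiv_prod (exists_comp_mapBaseChange_eq_id R A (MvPolynomial τ A))

theorem nonempty_kaehler_basis_mvPolynomial {ι : Type*} (τ : Type*) (b : Module.Basis ι A Ω[A⁄R]) :
    Nonempty (Module.Basis (ι ⊕ τ) (MvPolynomial τ A) Ω[MvPolynomial τ A⁄R]) := by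
  obtain ⟨e⟩ := nonempty_kaehler_equiv_prod_mvPolynomial (R := R) (A := A) τ
  exact ⟨((b.baseChange _).prod (KaehlerDifferential.mvPolynomialBasis A τ)).map e.symm⟩

theorem IsStablyFree.exists_kaehler_basis_mvPolynomial (h : IsStablyFree A Ω[A⁄R]) :
    ∃ s t : ℕ, Nonempty (Module.Basis (Fin t) (MvPolynomial (Fin s) A)
      Ω[MvPolynomial (Fin s) A⁄R]) := by
  obtain ⟨s, t, ⟨f⟩⟩ := h
  let T := MvPolynomial (Fin s) A
  obtain ⟨e⟩ := nonempty_kaehler_equiv_prod_mvPolynomial (R := R) (A := A) (Fin s)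
  refine ⟨s, t, ⟨.ofEquivFun (e ≪≫ₗ ?_)⟩⟩
  exact (LinearEquiv.refl T _).prodCongr
      ((KaehlerDifferential.mvPolynomialBasis A (Fin s)).equivFun ≪≫ₗ
        (piScalarRight A T T _).symm) ≪≫ₗ
    (prodRight A T T _ _).symm ≪≫ₗ f.baseChange A T _ _ ≪≫ₗ piScalarRight A T T _

theorem isStablyFree_kaehler_of_basis_mvPolynomial {ι τ : Type*} [Finite ι] [Finite τ]
    (b : Module.Basis ι (MvPolynomial τ A) Ω[MvPolynomial τ A⁄R]) : IsStablyFree A Ω[A⁄R] := by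
  let T := MvPolynomial τ A
  obtain ⟨e⟩ := nonempty_kaehler_equiv_prod_mvPolynomial (R := R) (A := A) τ
  have hT : IsStablyFree T (T ⊗[A] Ω[A⁄R]) :=
    isStablyFree_of_basis_prod (KaehlerDifferential.mvPolynomialBasis A τ) (b.map e)
  let ε : T →ₐ[A] A := MvPolynomial.aeval fun _ => 0
  let : Algebra T A := ε.toAlgebra
  have : IsScalarTower A T A := IsScalarTower.of_algebraMap_eq fun a => (ε.commutes a).symm
  exact (hT.baseChange A).of_linearEquiv
    (AlgebraTensorModule.cancelBaseChange A T A A _ ≪≫ₗ TensorProduct.lid A _)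

end SmoothExtension

section NoetherianInduction

variable {R B A : Type*} [CommRing R] [CommRing B] [CommRing A] [Algebra R B] [Algebra R A]
  [Algebra B A] [IsScalarTower R B A]

variable (B A) in
/-- Modulo `I`, the algebra `A` is stably isomorphic to a polynomial ring over `B`; this is the
property shown by Noetherian induction on `I`. The isomorphism goes from `B[X]` to `A[Z]`, so that
it is given by lifts to `A[Z]` of its coordinates. -/
def IsStablyPolynomialModulo (I : Ideal B) : Prop :=
  ∃ (σ τ : Type) (_ : Finite σ) (_ : Finite τ)
    (f : MvPolynomial σ B →ₐ[B] MvPolynomial τ A), BijectiveModulo I f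

theorem isStablyPolynomialModulo_top : IsStablyPolynomialModulo B A ⊤ :=
  have : Subsingleton (B ⧸ (⊤ : Ideal B)) := Ideal.Quotient.subsingleton_iff.mpr rfl
  ⟨Empty, Empty, inferInstance, inferInstance, MvPolynomial.aeval Empty.elim,
    .of_subsingleton_quotient _⟩

theorem IsStablyPolynomialModulo.exists_algEquiv (h : IsStablyPolynomialModulo B A ⊥) :
    ∃ r s : ℕ, Nonempty (MvPolynomial (Fin r) A ≃ₐ[B] MvPolynomial (Fin s) B) := by
  obtain ⟨σ, τ, _, _, f, hf⟩ := h
  exact ⟨_, _, ⟨((MvPolynomial.renameEquiv A (Finite.equivFin τ)).symm.restrictScalars B).trans <|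
    (AlgEquiv.ofBijective f hf.bijective_of_bot).symm.trans <|
      MvPolynomial.renameEquiv B (Finite.equivFin σ)⟩⟩

theorem IsStablyPolynomialModulo.of_mvPolynomial {I : Ideal B} (ρ : Type) [Finite ρ]
    (h : IsStablyPolynomialModulo B (MvPolynomial ρ A) I) : IsStablyPolynomialModulo B A I := by
  obtain ⟨σ, τ, _, _, f, hf⟩ := h
  let e := (MvPolynomial.sumAlgEquiv A τ ρ).symm.restrictScalars B
  exact ⟨σ, τ ⊕ ρ, inferInstance, inferInstance, e.toAlgHom.comp f,
    (BijectiveModulo.of_bijective I e.bijective).comp hf⟩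

theorem IsStablyPolynomialModulo.of_sup_span_of_sq_mem [Module.Flat R A] {I : Ideal R} {t : R}
    (ht : t ^ 2 ∈ I)
    (h : IsStablyPolynomialModulo B A ((I ⊔ Ideal.span {t}).map (algebraMap R B))) :
    IsStablyPolynomialModulo B A (I.map (algebraMap R B)) := by
  obtain ⟨σ, τ, _, _, f, hf⟩ := h
  have : Module.Flat R (MvPolynomial τ A) := Module.Flat.trans R A _
  exact ⟨σ, τ, ‹_›, ‹_›, f,
    bijectiveModulo_map_iff.mpr (.of_sup_span_of_sq_mem ht (bijectiveModulo_map_iff.mp hf))⟩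

theorem IsStablyPolynomialModulo.of_sup_span [IsNoetherianRing B] [Algebra.FiniteType B A]
    [Module.Flat R B] [Module.Flat R A] {ι : Type} [Finite ι] (b : Module.Basis ι A Ω[A⁄B])
    {I : Ideal R} {t : R} (ht : IsSMulRegular (R ⧸ I) t)
    (hgen : IsPolynomialModuloAway (I.map (algebraMap R B)) (algebraMap R B t) A)
    (h : IsStablyPolynomialModulo B A ((I ⊔ Ideal.span {t}).map (algebraMap R B))) :
    IsStablyPolynomialModulo B A (I.map (algebraMap R B)) := by
  obtain ⟨σ, τ, _, _, f, hf⟩ := h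
  obtain ⟨_, _, g, hg, hgt⟩ := hgen.mvPolynomial τ
  obtain ⟨b'⟩ := nonempty_kaehler_basis_mvPolynomial τ b
  have : Module.Flat R (MvPolynomial τ A) := Module.Flat.trans R A _
  rw [Ideal.map_sup, Ideal.map_span, Set.image_singleton] at hf
  have htB := (isSMulRegular_algebraMap_iff B).mpr (isSMulRegular_quotient_map (M := B) ht)
  have htA := (isSMulRegular_algebraMap_iff B).mpr
    (isSMulRegular_quotient_map (M := MvPolynomial τ A) ht)
  rw [← map_map_algebraMap B] at htA
  obtain ⟨F, hF⟩ := exists_bijectiveModulo_of_bijectiveModulo_sup_span htB htA hf hg hgt b'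
  exact .of_mvPolynomial τ ⟨_, _, inferInstance, inferInstance, F, hF⟩

theorem isStablyPolynomialModulo_map [IsNoetherianRing R] [IsNoetherianRing B]
    [Algebra.FiniteType B A] [Module.Flat R B] [Module.Flat R A] {ι : Type} [Finite ι]
    (b : Module.Basis ι A Ω[A⁄B])
    (hgen : ∀ I : Ideal R, I.IsRadical → ∃ t : R, IsSMulRegular (R ⧸ I) t ∧
      IsPolynomialModuloAway (I.map (algebraMap R B)) (algebraMap R B t) A) (I : Ideal R) :
    IsStablyPolynomialModulo B A (I.map (algebraMap R B)) := by
  induction I using IsNoetherian.induction with | hgt I ih =>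
  have ih' {t : R} (ht : t ∉ I) :
      IsStablyPolynomialModulo B A (Ideal.map (algebraMap R B) (I ⊔ Ideal.span {t})) :=
    ih _ (left_lt_sup.mpr (mt (Ideal.span_singleton_le_iff_mem I).mp ht))
  by_cases hI : Ideal.IsRadical I
  · obtain ⟨t, ht, ht'⟩ := hgen I hI
    by_cases htI : t ∈ I
    · obtain rfl : I = ⊤ := (Ideal.eq_top_iff_one I).mpr <| Ideal.Quotient.eq_zero_iff_mem.mp <|
        ht.right_eq_zero_of_smul (Ideal.Quotient.eq_zero_iff_mem.mpr (Ideal.mul_mem_right 1 _ htI))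
      rw [Ideal.map_top]
      exact isStablyPolynomialModulo_top
    · exact .of_sup_span b ht ht' (ih' htI)
  · obtain ⟨t, ht, htI⟩ : ∃ t, t ^ 2 ∈ I ∧ t ∉ I := by
      simpa [Ideal.isRadical_iff_pow_one_lt 2 one_lt_two] using hI
    exact .of_sup_span_of_sq_mem ht (ih' htI)

end NoetherianInduction

section SplitInjection

variable {A M N : Type*} [CommRing A] [AddCommGroup M] [Module A M] [AddCommGroup N] [Module A N]

theorem eq_top_of_forall_maximal {L : Submodule A M} [Module.Finite A M]
    (h : ∀ (m : Ideal A) [m.IsMaximal], L ⊔ m • ⊤ = ⊤) : L = ⊤ := by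
  refine (eq_top_or_exists_le_coatom L).resolve_right ?_
  rintro ⟨P, hP, hL⟩
  have : IsSimpleModule A (M ⧸ P) := isSimpleModule_iff_isCoatom.mpr hP
  have := IsSimpleModule.annihilator_isMaximal (R := A) (M := M ⧸ P)
  refine hP.1 (eq_top_iff.mpr ((h (Module.annihilator A (M ⧸ P))).ge.trans (sup_le hL ?_)))
  refine Submodule.smul_le.mpr fun a ha x _ => ?_
  rw [← Submodule.Quotient.mk_eq_zero, Submodule.Quotient.mk_smul]
  exact Module.mem_annihilator.mp ha _

theorem mem_smul_top_dual_of_forall_mem {ι : Type*} [Finite ι] (b : Module.Basis ι A M)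
    {I : Ideal A} {φ : Module.Dual A M} (h : ∀ x, φ x ∈ I) :
    φ ∈ I • (⊤ : Submodule A (Module.Dual A M)) := by
  have := Fintype.ofFinite ι
  rw [← b.sum_dual_apply_smul_coord φ]
  exact sum_mem fun i _ => Submodule.smul_mem_smul (h _) Submodule.mem_top

theorem exists_leftInverse_of_forall_maximal {ι : Type*} [Finite ι] (b : Module.Basis ι A M)
    [Module.Projective A N] {u : M →ₗ[A] N}
    (h : ∀ (m : Ideal A) [m.IsMaximal] (f : M →ₗ[A] A ⧸ m), ∃ g, g ∘ₗ u = f) :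
    ∃ l, l ∘ₗ u = LinearMap.id := by
  have := Fintype.ofFinite ι
  have := Module.Finite.of_basis b
  have := Module.Free.of_basis b
  have hdual : LinearMap.range u.dualMap = ⊤ := by
    refine eq_top_of_forall_maximal fun m _ => eq_top_iff.mpr fun φ _ => ?_
    obtain ⟨g, hg⟩ := h m (m.mkQ ∘ₗ φ)
    obtain ⟨ψ, rfl⟩ := Module.projective_lifting_property m.mkQ g m.mkQ_surjective
    refine Submodule.mem_sup.mpr ⟨u.dualMap ψ, ⟨ψ, rfl⟩, φ - u.dualMap ψ,
      mem_smul_top_dual_of_forall_mem b fun x => ?_, add_sub_cancel _ _⟩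
    exact (Submodule.Quotient.eq m).mp (LinearMap.congr_fun hg x).symm
  choose φ hφ using fun i => LinearMap.range_eq_top.mp hdual (b.coord i)
  refine ⟨∑ i, (φ i).smulRight (b i), LinearMap.ext fun x => ?_⟩
  calc (∑ i, (φ i).smulRight (b i)) (u x) = ∑ i, (φ i) (u x) • b i := by simp
    _ = ∑ i, b.repr x i • b i :=
        Finset.sum_congr rfl fun i _ => congrArg (· • b i) (LinearMap.congr_fun (hφ i) x)
    _ = x := b.sum_repr x

end SplitInjection

section Derivations

variable {R B A : Type*} [CommRing R] [CommRing B] [CommRing A] [Algebra R B] [Algebra R A]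
  [Algebra B A] [IsScalarTower R B A]

theorem exists_derivation_extension_of_formallySmooth [Algebra.FormallySmooth B A] {N : Type*}
    [AddCommGroup N] [Module R N] [Module B N] [Module A N] [IsScalarTower R B N]
    [IsScalarTower B A N] [IsScalarTower R A N] (δ : Derivation R B N) :
    ∃ D : Derivation R A N, ∀ b, D (algebraMap B A b) = δ b := by
  obtain ⟨l, hl⟩ := exists_comp_mapBaseChange_eq_id R B A
  refine ⟨(δ.liftKaehlerDifferential.liftBaseChange A ∘ₗ l).compDer (KaehlerDifferential.D R A),
    fun b => ?_⟩
  have := LinearMap.congr_fun hl (1 ⊗ₜ KaehlerDifferential.D R B b)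
  simp only [LinearMap.comp_apply, KaehlerDifferential.mapBaseChange_tmul, one_smul,
    KaehlerDifferential.map_D, LinearMap.id_apply] at this
  simp [this]

theorem exists_derivation_extension_of_isPushout {K B' : Type*} [CommRing K] [Algebra R K]
    [CommRing B'] [Algebra R B'] [Algebra B B'] [Algebra K B'] [IsScalarTower R B B']
    [IsScalarTower R K B'] [Algebra.IsPushout R K B B'] {N : Type*} [AddCommGroup N] [Module R N]
    [Module B N] [Module K N] [Module B' N] [IsScalarTower R B N] [IsScalarTower K B' N]
    [IsScalarTower B B' N] (δ : Derivation R B N) :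
    ∃ D : Derivation K B' N, ∀ b, D (algebraMap B B' b) = δ b := by
  let e := KaehlerDifferential.tensorKaehlerEquiv R K B B'
  refine ⟨(δ.liftKaehlerDifferential.liftBaseChange B' ∘ₗ e.symm.toLinearMap).compDer
    (KaehlerDifferential.D K B'), fun b => ?_⟩
  have : e.symm (KaehlerDifferential.D K B' (algebraMap B B' b)) =
      1 ⊗ₜ KaehlerDifferential.D R B b := by
    rw [LinearEquiv.symm_apply_eq]
    simp [e]
  simp [this]

theorem exists_derivation_extension_of_formallySmooth_baseChange {K k : Type*} [CommRing K]
    [Algebra R K] [CommRing k] [Algebra R k] [Algebra B k] [Algebra A k] [Algebra K k]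
    [IsScalarTower R B k] [IsScalarTower R A k] [IsScalarTower B A k] [IsScalarTower R K k]
    (hf : (Algebra.TensorProduct.map (AlgHom.id K K)
      (IsScalarTower.toAlgHom R B A)).toRingHom.FormallySmooth) (δ : Derivation R B k) :
    ∃ D : Derivation R A k, ∀ b, D (algebraMap B A b) = δ b := by
  let f := Algebra.TensorProduct.map (AlgHom.id K K) (IsScalarTower.toAlgHom R B A)
  let π : K ⊗[R] A →ₐ[K] k := Algebra.TensorProduct.lift (Algebra.ofId K k)
    (IsScalarTower.toAlgHom R A k) fun _ _ => Commute.all _ _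
  let : Algebra (K ⊗[R] B) (K ⊗[R] A) := f.toAlgebra
  let : Algebra B (K ⊗[R] B) := Algebra.TensorProduct.rightAlgebra
  let : Algebra A (K ⊗[R] A) := Algebra.TensorProduct.rightAlgebra
  let : Algebra (K ⊗[R] A) k := π.toAlgebra
  let : Algebra (K ⊗[R] B) k := (π.comp f).toAlgebra
  have : IsScalarTower K (K ⊗[R] B) (K ⊗[R] A) := .of_algebraMap_eq fun x => (f.commutes x).symm
  have : IsScalarTower (K ⊗[R] B) (K ⊗[R] A) k := .of_algebraMap_eq fun _ => rfl
  have : IsScalarTower K (K ⊗[R] A) k := .of_algebraMap_eq fun x => (π.commutes x).symm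
  have : IsScalarTower K (K ⊗[R] B) k := .of_algebraMap_eq fun x => ((π.comp f).commutes x).symm
  have : IsScalarTower A (K ⊗[R] A) k := .of_algebraMap_eq fun x => by
    change algebraMap A k x = π (1 ⊗ₜ x)
    simp [π]
  have : IsScalarTower B (K ⊗[R] B) k := .of_algebraMap_eq fun x => by
    change algebraMap B k x = π (f (1 ⊗ₜ x))
    simp [π, f, IsScalarTower.algebraMap_apply B A k]
  have : Algebra.FormallySmooth (K ⊗[R] B) (K ⊗[R] A) := hf
  obtain ⟨D₁, hD₁⟩ := exists_derivation_extension_of_isPushout (K := K) (B' := K ⊗[R] B) δ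
  obtain ⟨D₂, hD₂⟩ := exists_derivation_extension_of_formallySmooth (A := K ⊗[R] A) D₁
  refine ⟨(D₂.restrictScalars R).compAlgebraMap A, fun b => ?_⟩
  rw [← hD₁, ← hD₂]
  change D₂ (1 ⊗ₜ _) = D₂ (f (1 ⊗ₜ b))
  simp [f]

theorem FibersPolynomialOver.exists_derivation_extension {d : ℕ} (h : FibersPolynomialOver R B A d)
    {k : Type*} [Field k] [Algebra R k] [Algebra B k] [Algebra A k] [IsScalarTower R B k]
    [IsScalarTower R A k] [IsScalarTower B A k] (δ : Derivation R B k) :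
    ∃ D : Derivation R A k, ∀ b, D (algebraMap B A b) = δ b := by
  let P := RingHom.ker (algebraMap R k)
  have : P.IsPrime := RingHom.ker_isPrime _
  let κ : P.ResidueField →ₐ[R] k := Ideal.ResidueField.liftₐ P (Algebra.ofId R k) le_rfl
    fun _ hr => isUnit_iff_ne_zero.mpr hr
  let : Algebra P.ResidueField k := κ.toAlgebra
  have : IsScalarTower R P.ResidueField k := .of_algebraMap_eq fun r => (κ.commutes r).symm
  refine exists_derivation_extension_of_formallySmooth_baseChange (K := P.ResidueField) ?_ δ
  let : Algebra (P.ResidueField ⊗[R] B) (P.ResidueField ⊗[R] A) :=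
    (Algebra.TensorProduct.map (AlgHom.id R P.ResidueField)
      (IsScalarTower.toAlgHom R B A)).toRingHom.toAlgebra
  obtain ⟨φ⟩ : Nonempty ((P.ResidueField ⊗[R] A) ≃ₐ[P.ResidueField ⊗[R] B]
    MvPolynomial (Fin d) (P.ResidueField ⊗[R] B)) := h P inferInstance
  exact Algebra.FormallySmooth.of_equiv φ.symm

theorem FibersPolynomialOver.exists_comp_mapBaseChange_eq_id {d : ℕ}
    (h : FibersPolynomialOver R B A d) [Module.Projective A Ω[A⁄R]] {ι : Type*} [Finite ι]
    (b : Module.Basis ι B Ω[B⁄R]) :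
    ∃ l : Ω[A⁄R] →ₗ[A] A ⊗[B] Ω[B⁄R],
      l ∘ₗ KaehlerDifferential.mapBaseChange R B A = LinearMap.id := by
  refine exists_leftInverse_of_forall_maximal (b.baseChange A) fun m _ f => ?_
  let := Ideal.Quotient.field m
  let δ : Derivation R B (A ⧸ m) := ((f.restrictScalars B).comp
    (TensorProduct.mk B A Ω[B⁄R] 1)).compDer (KaehlerDifferential.D R B)
  obtain ⟨D, hD⟩ := h.exists_derivation_extension δ
  refine ⟨D.liftKaehlerDifferential, ?_⟩
  ext b
  simp [hD, δ]

end Derivations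

section StablyFreeIffStablyPolynomial

variable {R B A : Type*} [CommRing R] [CommRing B] [CommRing A] [Algebra R B] [Algebra R A]
  [Algebra B A] [IsScalarTower R B A]

theorem FibersPolynomialOver.isStablyFree_kaehler {d : ℕ} (h : FibersPolynomialOver R B A d)
    {ι : Type*} [Finite ι] (b : Module.Basis ι B Ω[B⁄R]) (hΩ : IsStablyFree A Ω[A⁄R]) :
    IsStablyFree A Ω[A⁄B] := by
  have := hΩ.projective
  obtain ⟨e⟩ := nonempty_kaehler_equiv_prod (h.exists_comp_mapBaseChange_eq_id b)
  exact (hΩ.of_linearEquiv e).of_prod (b.baseChange A)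

theorem FibersPolynomialOver.exists_algEquiv_of_isStablyFree [IsNoetherianRing R]
    [IsNoetherianRing B] [Algebra.FiniteType B A] [Module.Flat R B] [Module.Flat R A] {d : ℕ}
    (h : FibersPolynomialOver R B A d) (hΩ : IsStablyFree A Ω[A⁄B]) :
    ∃ r s : ℕ, Nonempty (MvPolynomial (Fin r) A ≃ₐ[B] MvPolynomial (Fin s) B) := by
  obtain ⟨s, t, ⟨b⟩⟩ := hΩ.exists_kaehler_basis_mvPolynomial
  have : Algebra.FiniteType B (MvPolynomial (Fin s) A) := .trans ‹_› inferInstance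
  have : Module.Flat R (MvPolynomial (Fin s) A) := .trans R A _
  have hmod : IsStablyPolynomialModulo B (MvPolynomial (Fin s) A)
      ((⊥ : Ideal R).map (algebraMap R B)) :=
    isStablyPolynomialModulo_map b (fun I hI => by
      obtain ⟨t, ht, hpoly⟩ := exists_isPolynomialModuloAway h hI
      exact ⟨t, ht, hpoly.mvPolynomial (Fin s)⟩) ⊥
  rw [Ideal.map_bot] at hmod
  exact (hmod.of_mvPolynomial (Fin s)).exists_algEquiv

theorem isStablyFree_kaehler_of_algEquiv {ι σ τ : Type*} [Finite ι] [Finite σ] [Finite τ]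
    (b : Module.Basis ι B Ω[B⁄R]) (e : MvPolynomial τ A ≃ₐ[B] MvPolynomial σ B) :
    IsStablyFree A Ω[A⁄R] := by
  obtain ⟨b'⟩ := nonempty_kaehler_basis_mvPolynomial σ b
  obtain ⟨c⟩ := nonempty_kaehler_basis_of_algEquiv (e.symm.restrictScalars R) b'
  exact isStablyFree_kaehler_of_basis_mvPolynomial c

theorem stablyFree_kaehler_iff_stablyPolynomial_general [IsNoetherianRing R]
    [Algebra.FiniteType R B] [Module.Flat R B] [Algebra.FiniteType R A] [Module.Flat R A]
    [Module.Free B Ω[B⁄R]] {d : ℕ} (h : FibersPolynomialOver R B A d) :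
    IsStablyFree A Ω[A⁄R] ↔
      ∃ r s : ℕ, Nonempty (MvPolynomial (Fin r) A ≃ₐ[B] MvPolynomial (Fin s) B) := by
  have : IsNoetherianRing B := Algebra.FiniteType.isNoetherianRing R B
  have : Algebra.FiniteType B A := .of_restrictScalars_finiteType R B A
  let b := Module.Free.chooseBasis B Ω[B⁄R]
  exact ⟨fun hΩ => h.exists_algEquiv_of_isStablyFree (h.isStablyFree_kaehler b hΩ),
    fun ⟨_, _, ⟨e⟩⟩ => isStablyFree_kaehler_of_algEquiv b e⟩

end StablyFreeIffStablyPolynomial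

/-- (Main theorem, equivalence form.)  Let `R` be a Noetherian domain, `A` an
`𝔸ⁿ`-fibration over `R` and `W` an `m`-tuple residual variable of `A` over `R`, with
`B = R[W]`.  Then `Ω_R(A)` is a stably free `A`-module if and only if `A` is a stably
polynomial algebra over `B`. -/
theorem stablyFree_kaehler_iff_stablyPolynomial
    (R A : Type*) [CommRing R] [IsDomain R] [IsNoetherianRing R]
    [CommRing A] [Algebra R A]
    (n m : ℕ) (hA : IsAffineFibration R A n)
    (W : Fin m → A) (hW : IsResidualVariable R A n m W) :
    IsStablyFree A (KaehlerDifferential R A) ↔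
      ∃ r s : ℕ,
        Nonempty (MvPolynomial (Fin r) A ≃ₐ[↥(Algebra.adjoin R (Set.range W))]
          MvPolynomial (Fin s) ↥(Algebra.adjoin R (Set.range W))) := by
  obtain ⟨_, _, -⟩ := hA
  obtain ⟨hind, hfib⟩ := hW
  have : Algebra.FiniteType R (Algebra.adjoin R (Set.range W)) :=
    .equiv inferInstance hind.aevalEquiv
  have : Module.Flat R (Algebra.adjoin R (Set.range W)) :=
    .of_linearEquiv hind.aevalEquiv.symm.toLinearEquiv
  obtain ⟨b⟩ := nonempty_kaehler_basis_of_algEquiv hind.aevalEquiv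
    (KaehlerDifferential.mvPolynomialBasis R (Fin m))
  have := Module.Free.of_basis b
  exact stablyFree_kaehler_iff_stablyPolynomial_general hfib
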